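/- arXiv:nlin/0604063 — 13 statements merged into one kernel-verified Lean document; each statement's English description precedes it below -/
import Mathlib

section
/- Let ν, b, μ, A ∈ ℂ with ν ≠ 0, let r > 0, and suppose u is analytic on the punctured disc {z : 0 < |z| < r}, solves the KS ODE there, and extends to a meromorphic function at 0 having a pole at 0. Then the pole of u at 0 has order exactly 3, and z³·u(z) tends to 120ν as z → 0. -/
open Filter Topology

lemma ks_step (f g : ℂ → ℂ) (n : ℕ) (hg : AnalyticAt ℂ g 0)
    (h : ∀ᶠ z in 𝓝[≠] (0 : ℂ), f z = g z / z ^ n) :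
    ∃ k : ℂ → ℂ, AnalyticAt ℂ k 0 ∧ k 0 = -(n : ℂ) * g 0 ∧
      ∀ᶠ z in 𝓝[≠] (0 : ℂ), deriv f z = k z / z ^ (n + 1) := by
  refine ⟨fun z => z * deriv g z - n * g z, ?_, by simp, ?_⟩
  · exact (analyticAt_id.mul hg.deriv).sub (analyticAt_const.mul hg)
  · have h1 : ∀ᶠ z in 𝓝[≠] (0 : ℂ), ∀ᶠ w in 𝓝[≠] z, f w = g w / w ^ n := by
      have := eventually_eventually_nhdsWithin.2 h
      filter_upwards [this, self_mem_nhdsWithin] with z hz hz0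
      exact hz.filter_mono (by
        have hz0' : z ≠ 0 := hz0
        rw [isOpen_compl_singleton.nhdsWithin_eq hz0]
        exact nhdsWithin_le_nhds)
    have h2 : ∀ᶠ z in 𝓝[≠] (0 : ℂ), AnalyticAt ℂ g z :=
      hg.eventually_analyticAt.filter_mono nhdsWithin_le_nhds
    filter_upwards [h, h1, h2, self_mem_nhdsWithin] with z hz hz1 hz2 hz0
    have hz0' : z ≠ 0 := hz0
    have he : f =ᶠ[𝓝 z] fun w => g w / w ^ n := by
      have : ∀ᶠ w in 𝓝 z, w ≠ z → f w = g w / w ^ n := eventually_nhdsWithin_iff.1 hz1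
      filter_upwards [this] with w hw
      by_cases hwz : w = z
      · rw [hwz]; exact hz
      · exact hw hwz
    rw [he.deriv_eq]
    have hd := (hz2.differentiableAt.hasDerivAt.div (hasDerivAt_pow n z) (pow_ne_zero n hz0')).deriv
    have hd' : deriv (fun w => g w / w ^ n) z = _ := hd
    rw [hd']
    rcases n with _ | m
    · simp; field_simp
    · simp only [Nat.add_sub_cancel]
      field_simp
      ring

lemma ks_lim (F : ℂ → ℂ) (hF : AnalyticAt ℂ F 0) (h : ∀ᶠ z in 𝓝[≠] (0 : ℂ), F z = 0) :
    F 0 = 0 := by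
  have h1 : Tendsto F (𝓝[≠] 0) (𝓝 (F 0)) := hF.continuousAt.tendsto.mono_left nhdsWithin_le_nhds
  have h2 : Tendsto F (𝓝[≠] 0) (𝓝 0) := tendsto_const_nhds.congr' (by
    filter_upwards [h] with z hz using hz.symm)
  exact tendsto_nhds_unique h1 h2

/-- an analytic solution of the KS ODE on a punctured disc which extends
meromorphically to `0` with a pole at `0` has a pole of order exactly `3` there, and
`z³ u(z) → 120ν` as `z → 0`. -/
theorem ks_pole_order_three
    (ν b μ A : ℂ) (hν : ν ≠ 0) (r : ℝ) (hr : 0 < r)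
    (u : ℂ → ℂ)
    (hana : AnalyticOnNhd ℂ u {z : ℂ | 0 < ‖z‖ ∧ ‖z‖ < r})
    (hode : ∀ z : ℂ, 0 < ‖z‖ → ‖z‖ < r →
      ν * deriv^[3] u z + b * deriv^[2] u z + μ * deriv u z + (u z) ^ 2 / 2 + A = 0)
    (n : ℕ) (hn : 1 ≤ n) (g : ℂ → ℂ)
    (hg : AnalyticAt ℂ g 0) (hg0 : g 0 ≠ 0)
    (hmero : ∀ z : ℂ, 0 < ‖z‖ → ‖z‖ < r → u z = g z / z ^ n) :
    n = 3 ∧ Tendsto (fun z : ℂ => z ^ 3 * u z) (𝓝[≠] (0 : ℂ)) (𝓝 (120 * ν)) := by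
  have hball : ∀ᶠ z in 𝓝[≠] (0 : ℂ), 0 < ‖z‖ ∧ ‖z‖ < r := by
    have : ∀ᶠ z in 𝓝[≠] (0 : ℂ), z ∈ Metric.ball (0 : ℂ) r :=
      mem_nhdsWithin_of_mem_nhds (Metric.ball_mem_nhds 0 hr)
    filter_upwards [this, self_mem_nhdsWithin] with z hz hz0
    exact ⟨norm_pos_iff.2 hz0, by simpa using hz⟩
  have e0 : ∀ᶠ z in 𝓝[≠] (0 : ℂ), u z = g z / z ^ n := by
    filter_upwards [hball] with z hz using hmero z hz.1 hz.2
  obtain ⟨g1, a1, v1, e1⟩ := ks_step u g n hg e0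
  obtain ⟨g2, a2, v2, e2⟩ := ks_step _ g1 _ a1 e1
  obtain ⟨g3, a3, v3, e3⟩ := ks_step _ g2 _ a2 e2
  have key : ∀ᶠ z in 𝓝[≠] (0 : ℂ), z ≠ 0 ∧ ν * g3 z * z ^ n + b * g2 z * z ^ (n + 1)
      + μ * g1 z * z ^ (n + 2) + g z ^ 2 / 2 * z ^ 3 + A * z ^ (2 * n + 3) = 0 := by
    filter_upwards [hball, e0, e1, e2, e3, self_mem_nhdsWithin] with z hz h0 h1 h2 h3 hz0
    have hz0' : z ≠ 0 := hz0
    refine ⟨hz0', ?_⟩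
    have h := hode z hz.1 hz.2
    simp only [Function.iterate_succ, Function.iterate_zero, Function.comp, id] at h
    rw [h3, h2, h1, h0] at h
    have h' : z ^ (2 * n + 3) * (ν * (g3 z / z ^ (n + 1 + 1 + 1)) + b * (g2 z / z ^ (n + 1 + 1)) +
      μ * (g1 z / z ^ (n + 1)) + (g z / z ^ n) ^ 2 / 2 + A) = 0 := by rw [h, mul_zero]
    rw [← h']
    have hp : z ^ n ≠ 0 := pow_ne_zero n hz0'
    simp only [pow_add, pow_mul', pow_one]
    field_simp
  have hv3 : g3 0 = -((n : ℂ) * (n + 1) * (n + 2)) * g 0 := by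
    rw [v3, v2, v1]; push_cast; ring
  have hn3 : n = 3 := by
    rcases lt_trichotomy n 3 with hlt | heq | hgt
    · exfalso
      obtain ⟨m, hm⟩ : ∃ m, 3 = n + (m + 1) := ⟨3 - n - 1, by omega⟩
      have := ks_lim (fun z => ν * g3 z + b * g2 z * z + μ * g1 z * z ^ 2
        + g z ^ 2 / 2 * z ^ (m + 1) + A * z ^ (n + 3)) (by fun_prop) (by
          filter_upwards [key] with z hz
          obtain ⟨hz0, hz⟩ := hz
          refine (mul_eq_zero.1 (?_ : z ^ n * _ = 0)).resolve_left (pow_ne_zero n hz0)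
          rw [← hz]
          rw [show z ^ 3 = z ^ (n + (m + 1)) by rw [← hm]]
          ring)
      have h3 : ν * g3 0 = 0 := by simpa using this
      rw [hv3] at h3
      have hn0 : (n : ℂ) ≠ 0 := by exact_mod_cast (by omega : n ≠ 0)
      have hn1 : (n : ℂ) + 1 ≠ 0 := by exact_mod_cast (by omega : n + 1 ≠ 0)
      have hn2 : (n : ℂ) + 2 ≠ 0 := by exact_mod_cast (by omega : n + 2 ≠ 0)
      exact mul_ne_zero hν (mul_ne_zero (neg_ne_zero.2
        (mul_ne_zero (mul_ne_zero hn0 hn1) hn2)) hg0) h3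
    · exact heq
    · exfalso
      obtain ⟨m, rfl⟩ : ∃ m, n = 3 + (m + 1) := ⟨n - 3 - 1, by omega⟩
      have := ks_lim (fun z => ν * g3 z * z ^ (m + 1) + b * g2 z * z ^ (m + 2)
        + μ * g1 z * z ^ (m + 3)
        + g z ^ 2 / 2 + A * z ^ (2 * (3 + (m + 1)))) (by fun_prop) (by
          filter_upwards [key] with z hz
          obtain ⟨hz0, hz⟩ := hz
          refine (mul_eq_zero.1 (?_ : z ^ 3 * _ = 0)).resolve_left (pow_ne_zero 3 hz0)
          rw [← hz]
          ring)
      simp [hg0] at this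
  refine ⟨hn3, ?_⟩
  subst hn3
  have := ks_lim (fun z => ν * g3 z + b * g2 z * z + μ * g1 z * z ^ 2
    + g z ^ 2 / 2 + A * z ^ 6) (by fun_prop) (by
      filter_upwards [key] with z hz
      obtain ⟨hz0, hz⟩ := hz
      refine (mul_eq_zero.1 (?_ : z ^ 3 * _ = 0)).resolve_left (pow_ne_zero 3 hz0)
      rw [← hz]
      ring)
  have hval : g 0 = 120 * ν := by
    simp only [hv3] at this
    push_cast at this
    apply mul_left_cancel₀ hg0
    linear_combination 2 * this
  rw [← hval]
  refine (hg.continuousAt.tendsto.mono_left nhdsWithin_le_nhds).congr' ?_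
  filter_upwards [e0, self_mem_nhdsWithin] with z hz hz0
  have hz0' : z ≠ 0 := hz0
  rw [hz]
  field_simp
end

section
/- Let ν, b, μ, A ∈ ℂ with ν ≠ 0 and b² = 16μν. Set g₂ = μ²/(12ν²) and g₃ = (13μ³ + νA)/(1080ν³). Let U ⊆ ℂ be open and let w be analytic on U satisfying (w')² = 4w³ − g₂w − g₃ and w'' = 6w² − g₂/2 on U. Then the function u = −60ν w' − 15b w − bμ/(4ν) solves the KS ODE on U. -/
/-- the elliptic solution of the KS ODE when `b² = 16μν`:
if `w` solves the Weierstrass equation with `g₂ = μ²/(12ν²)`,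
`g₃ = (13μ³ + νA)/(1080ν³)` (together with `w'' = 6w² - g₂/2`), then
`u = -60ν w' - 15b w - bμ/(4ν)` solves `ν u''' + b u'' + μ u' + u²/2 + A = 0` on `U`. -/
theorem ks_elliptic_solution
    (ν b μ A : ℂ) (hν : ν ≠ 0) (hb : b ^ 2 = 16 * μ * ν)
    (g₂ g₃ : ℂ) (hg₂ : g₂ = μ ^ 2 / (12 * ν ^ 2))
    (hg₃ : g₃ = (13 * μ ^ 3 + ν * A) / (1080 * ν ^ 3))
    (U : Set ℂ) (hU : IsOpen U)
    (w : ℂ → ℂ) (hw : AnalyticOnNhd ℂ w U)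
    (hweq : ∀ z ∈ U, (deriv w z) ^ 2 = 4 * (w z) ^ 3 - g₂ * w z - g₃)
    (hweq2 : ∀ z ∈ U, deriv^[2] w z = 6 * (w z) ^ 2 - g₂ / 2)
    (u : ℂ → ℂ)
    (hu : ∀ z : ℂ, u z = -60 * ν * deriv w z - 15 * b * w z - b * μ / (4 * ν)) :
    ∀ z ∈ U,
      ν * deriv^[3] u z + b * deriv^[2] u z + μ * deriv u z + (u z) ^ 2 / 2 + A = 0 := by
  have hw2 : ∀ z ∈ U, HasDerivAt (deriv w) (6 * (w z) ^ 2 - g₂ / 2) z := by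
    intro z hz
    have h := ((hw z hz).deriv.differentiableAt).hasDerivAt
    have e := hweq2 z hz
    simp only [Function.iterate_succ, Function.iterate_zero, Function.comp, id] at e
    rwa [e] at h
  have hw1 : ∀ z ∈ U, HasDerivAt w (deriv w z) z := fun z hz =>
    (hw z hz).differentiableAt.hasDerivAt
  have hufun : u = fun z => -60 * ν * deriv w z - 15 * b * w z - b * μ / (4 * ν) := funext hu
  have key : ∀ (f g h : ℂ → ℂ), (∀ z ∈ U, f z = g z) → (∀ z ∈ U, HasDerivAt g (h z) z) →
      ∀ z ∈ U, deriv f z = h z := by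
    intro f g h hfg hg z hz
    have e : f =ᶠ[nhds z] g := Filter.eventually_of_mem (hU.mem_nhds hz) hfg
    rw [e.deriv_eq, (hg z hz).deriv]
  have h1 := key u _ (fun z => -60 * ν * (6 * (w z) ^ 2 - g₂ / 2) - 15 * b * deriv w z)
    (fun z _ => hu z) (fun z hz => by
      exact (((hw2 z hz).const_mul (-60 * ν)).sub ((hw1 z hz).const_mul (15 * b))).sub_const _)
  have h2 := key (deriv u) _
    (fun z => -720 * ν * (w z * deriv w z) - 15 * b * (6 * (w z) ^ 2 - g₂ / 2))
    h1 (fun z hz => by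
      have := ((((((hw1 z hz).pow 2).const_mul 6).sub_const (g₂ / 2)).const_mul (-60 * ν)).sub
        ((hw2 z hz).const_mul (15 * b)))
      refine this.congr_deriv ?_
      push_cast
      ring)
  have h3 := key (deriv (deriv u)) _
    (fun z => -720 * ν * ((deriv w z) ^ 2 + w z * (6 * (w z) ^ 2 - g₂ / 2))
      - 180 * b * (w z * deriv w z))
    h2 (fun z hz => by
      have := ((((hw1 z hz).mul (hw2 z hz)).const_mul (-720 * ν)).sub
        (((((hw1 z hz).pow 2).const_mul 6).sub_const (g₂ / 2)).const_mul (15 * b)))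
      refine this.congr_deriv ?_
      push_cast
      ring)
  intro z hz
  have e1 := h1 z hz
  have e2 := h2 z hz
  have e3 := h3 z hz
  have e0 := hweq z hz
  simp only [Function.iterate_succ, Function.iterate_zero, Function.comp, id]
  rw [e3, e2, e1, hu z]
  generalize w z = x at *
  generalize deriv w z = p at *
  obtain ⟨c, hc⟩ : ∃ c, c = b * μ / (4 * ν) := ⟨_, rfl⟩
  obtain ⟨m, hm⟩ : ∃ m, m = μ / ν := ⟨_, rfl⟩
  have hμ : μ = m * ν := by rw [hm]; field_simp
  have hc' : c = b * m / 4 := by rw [hc, hm]; field_simp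
  have hg : g₂ = m ^ 2 / 12 := by rw [hg₂, hm]; field_simp
  have hA : A = 1080 * ν ^ 2 * g₃ - 13 * m ^ 3 * ν ^ 2 := by
    rw [hg₃, hm]; field_simp; ring
  rw [← hc, hc', hA]
  rw [hg] at e0 ⊢
  rw [hμ] at hb ⊢
  linear_combination (1080 * ν ^ 2) * e0 + (45 / 2 * x ^ 2 + 15 / 4 * m * x + 5 / 8 * m ^ 2 + m ^ 2 / 32) * hb
end

section
/- Let ν, μ ∈ ℂ with ν ≠ 0 and μ ≠ 0, let k, ξ₀ ∈ ℂ with k² = 11μ/(19ν), and set b = 0 and A = −4950 μ³/(19³ ν). Then the function u(ξ) = 120ν τ(ξ)³ − 15b τ(ξ)² + (60μ/19 − 30νk² − 15b²/(76ν)) τ(ξ) + (5/2)b k² − 13b³/(608ν²) + 7μb/(76ν), where τ(ξ) = (k/2)·tanh(k(ξ−ξ₀)/2), solves the KS ODE on the open set U = {ξ ∈ ℂ : cosh(k(ξ−ξ₀)/2) ≠ 0}. -/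
open Complex

/-- The Riccati equation satisfied by `τ`. -/
theorem ks_tau_hasDerivAt (k ξ₀ ξ : ℂ) (h : Complex.cosh (k * (ξ - ξ₀) / 2) ≠ 0) :
    HasDerivAt (fun z : ℂ => k / 2 * Complex.tanh (k * (z - ξ₀) / 2))
      (k ^ 2 / 4 - (k / 2 * Complex.tanh (k * (ξ - ξ₀) / 2)) ^ 2) ξ := by
  have h1 : HasDerivAt (fun z : ℂ => k * (z - ξ₀) / 2) (k / 2) ξ := by
    simpa using (((hasDerivAt_id ξ).sub_const ξ₀).const_mul k).div_const 2
  have h2 := ((h1.csinh.div h1.ccosh h).const_mul (k / 2))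
  have e : (fun z : ℂ => k / 2 * Complex.tanh (k * (z - ξ₀) / 2)) =
      fun z : ℂ => k / 2 * (Complex.sinh (k * (z - ξ₀) / 2) / Complex.cosh (k * (z - ξ₀) / 2)) := by
    funext z
    rw [Complex.tanh_eq_sinh_div_cosh]
  rw [e, Complex.tanh_eq_sinh_div_cosh]
  refine h2.congr_deriv ?_
  field_simp
  ring

/-- Derivative of a polynomial in a solution of a Riccati equation, on an open set. -/
theorem ks_deriv_poly (S : Set ℂ) (hS : IsOpen S) (q : ℂ) (τ f : ℂ → ℂ)
    (hτ : ∀ ξ ∈ S, HasDerivAt τ (q - τ ξ ^ 2) ξ) (p : Polynomial ℂ)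
    (hf : ∀ ξ ∈ S, f ξ = p.eval (τ ξ)) :
    ∀ ξ ∈ S, deriv f ξ =
      (p.derivative * (Polynomial.C q - Polynomial.X ^ 2)).eval (τ ξ) := by
  intro ξ hξ
  have h1 : f =ᶠ[nhds ξ] fun z => p.eval (τ z) := by
    filter_upwards [hS.mem_nhds hξ] with z hz using hf z hz
  rw [h1.deriv_eq]
  have h2 := (p.hasDerivAt (τ ξ)).comp ξ (hτ ξ hξ)
  have h3 := h2.deriv
  simp only [Function.comp_def] at h3
  rw [h3]
  simp

/-- a trigonometric (tanh-polynomial) solution of the KS traveling-wave ODE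
`ν u''' + b u'' + μ u' + u²/2 + A = 0`. -/
theorem ks_trig_solution_case1
    (ν b μ A k ξ₀ : ℂ) (hν : ν ≠ 0) (hμ : μ ≠ 0)
    (hk : k ^ 2 = 11 * μ / (19 * ν)) (hb : b = 0)
    (hA : A = -4950 * μ ^ 3 / (19 ^ 3 * ν))
    (τ u : ℂ → ℂ)
    (hτ : ∀ ξ : ℂ, τ ξ = k / 2 * Complex.tanh (k * (ξ - ξ₀) / 2))
    (hu : ∀ ξ : ℂ, u ξ =
      120 * ν * (τ ξ) ^ 3 - 15 * b * (τ ξ) ^ 2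
        + (60 * μ / 19 - 30 * ν * k ^ 2 - 15 * b ^ 2 / (76 * ν)) * τ ξ
        + 5 / 2 * b * k ^ 2 - 13 * b ^ 3 / (608 * ν ^ 2) + 7 * μ * b / (76 * ν)) :
    ∀ ξ : ℂ, Complex.cosh (k * (ξ - ξ₀) / 2) ≠ 0 →
      ν * deriv^[3] u ξ + b * deriv^[2] u ξ + μ * deriv u ξ + (u ξ) ^ 2 / 2 + A = 0 := by
  intro ξ hξ
  subst hb
  have hS : IsOpen {z : ℂ | Complex.cosh (k * (z - ξ₀) / 2) ≠ 0} := by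
    apply isOpen_ne_fun
    · exact Complex.continuous_cosh.comp (by fun_prop)
    · exact continuous_const
  have hT : ∀ z ∈ {z : ℂ | Complex.cosh (k * (z - ξ₀) / 2) ≠ 0},
      HasDerivAt τ (k ^ 2 / 4 - τ z ^ 2) z := by
    intro z hz
    have := ks_tau_hasDerivAt k ξ₀ z hz
    rw [hτ z]
    rwa [← (funext hτ : τ = _)] at this
  obtain ⟨q, hq⟩ : ∃ q, q = k ^ 2 / 4 := ⟨_, rfl⟩
  have hm : μ = 76 * ν * q / 11 := by
    rw [hq, hk]; field_simp; ring
  have hkq : k ^ 2 = 4 * q := by rw [hq]; ring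
  rw [← hq] at hT
  have h0 : ∀ z ∈ {z : ℂ | Complex.cosh (k * (z - ξ₀) / 2) ≠ 0}, u z =
      (Polynomial.C (120 * ν) * Polynomial.X ^ 3
        + Polynomial.C (-1080 / 11 * ν * q) * Polynomial.X).eval (τ z) := by
    intro z _
    rw [hu z, hkq, hm]
    simp only [Polynomial.eval_add, Polynomial.eval_mul, Polynomial.eval_C, Polynomial.eval_pow,
      Polynomial.eval_X]
    ring
  have h1 := ks_deriv_poly _ hS q τ _ hT _ h0
  have h2 := ks_deriv_poly _ hS q τ _ hT _ h1
  have h3 := ks_deriv_poly _ hS q τ _ hT _ h2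
  have hA' : A = -4950 * 64 / 1331 * ν ^ 2 * q ^ 3 := by
    rw [hA, hm]; field_simp; ring
  simp only [Function.iterate_succ, Function.iterate_zero, Function.comp_apply, id]
  rw [h3 ξ hξ, h1 ξ hξ, h0 ξ hξ, hA', hm]
  simp
  ring
end

section
/- Let ν, μ ∈ ℂ with ν ≠ 0 and μ ≠ 0, let k, ξ₀ ∈ ℂ with k² = −μ/(19ν), and set b = 0 and A = 450 μ³/(19³ ν). Then the function u(ξ) = 120ν τ(ξ)³ − 15b τ(ξ)² + (60μ/19 − 30νk² − 15b²/(76ν)) τ(ξ) + (5/2)b k² − 13b³/(608ν²) + 7μb/(76ν), where τ(ξ) = (k/2)·tanh(k(ξ−ξ₀)/2), solves the KS ODE on the open set U = {ξ ∈ ℂ : cosh(k(ξ−ξ₀)/2) ≠ 0}. -/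
open Complex

/-- a trigonometric (tanh-polynomial) solution of the KS traveling-wave ODE
`ν u''' + b u'' + μ u' + u²/2 + A = 0`. -/
theorem ks_trig_solution_case2
    (ν b μ A k ξ₀ : ℂ) (hν : ν ≠ 0) (hμ : μ ≠ 0)
    (hk : k ^ 2 = -μ / (19 * ν)) (hb : b = 0)
    (hA : A = 450 * μ ^ 3 / (19 ^ 3 * ν))
    (τ u : ℂ → ℂ)
    (hτ : ∀ ξ : ℂ, τ ξ = k / 2 * Complex.tanh (k * (ξ - ξ₀) / 2))
    (hu : ∀ ξ : ℂ, u ξ =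
      120 * ν * (τ ξ) ^ 3 - 15 * b * (τ ξ) ^ 2
        + (60 * μ / 19 - 30 * ν * k ^ 2 - 15 * b ^ 2 / (76 * ν)) * τ ξ
        + 5 / 2 * b * k ^ 2 - 13 * b ^ 3 / (608 * ν ^ 2) + 7 * μ * b / (76 * ν)) :
    ∀ ξ : ℂ, Complex.cosh (k * (ξ - ξ₀) / 2) ≠ 0 →
      ν * deriv^[3] u ξ + b * deriv^[2] u ξ + μ * deriv u ξ + (u ξ) ^ 2 / 2 + A = 0 := by
  have hμ' : μ = -19 * ν * k ^ 2 := by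
    rw [hk]; field_simp
  have hopen : IsOpen {ξ : ℂ | Complex.cosh (k * (ξ - ξ₀) / 2) ≠ 0} := by
    apply isOpen_ne_fun <;> fun_prop
  have hd : ∀ ξ : ℂ, Complex.cosh (k * (ξ - ξ₀) / 2) ≠ 0 →
      HasDerivAt τ (k ^ 2 / 4 - τ ξ ^ 2) ξ := by
    intro ξ h
    have e : τ = fun ξ => k / 2 * (Complex.sinh (k * (ξ - ξ₀) / 2) /
        Complex.cosh (k * (ξ - ξ₀) / 2)) := by
      funext x; rw [hτ, Complex.tanh_eq_sinh_div_cosh]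
    have hl : HasDerivAt (fun ξ : ℂ => k * (ξ - ξ₀) / 2) (k * 1 / 2) ξ :=
      (((hasDerivAt_id ξ).sub_const ξ₀).const_mul k).div_const 2
    rw [e]
    refine ((hl.csinh.fun_div hl.ccosh h).const_mul (k / 2)).congr_deriv ?_
    beta_reduce
    generalize Complex.cosh (k * (ξ - ξ₀) / 2) = c at h ⊢
    generalize Complex.sinh (k * (ξ - ξ₀) / 2) = s
    field_simp
    ring
  have hu0 : u = fun ξ => 120 * ν * (τ ξ ^ 3 - 3 * (k ^ 2 / 4) * τ ξ) := by
    funext x; rw [hu, hb, hμ']; field_simp; ring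
  have h1 : ∀ ξ : ℂ, Complex.cosh (k * (ξ - ξ₀) / 2) ≠ 0 →
      deriv u ξ = -360 * ν * (τ ξ ^ 2 - k ^ 2 / 4) ^ 2 := by
    intro ξ h
    have := ((((hd ξ h).fun_pow 3).fun_sub
      ((hd ξ h).const_mul (3 * (k ^ 2 / 4)))).const_mul (120 * ν)).deriv
    rw [hu0, this]; push_cast; ring
  have h2 : ∀ ξ : ℂ, Complex.cosh (k * (ξ - ξ₀) / 2) ≠ 0 →
      deriv (deriv u) ξ = 1440 * ν * (τ ξ * (τ ξ ^ 2 - k ^ 2 / 4) ^ 2) := by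
    intro ξ h
    have e : deriv u =ᶠ[nhds ξ] fun ξ => -360 * ν * (τ ξ ^ 2 - k ^ 2 / 4) ^ 2 :=
      Filter.eventually_of_mem (hopen.mem_nhds h) h1
    have := (((((hd ξ h).fun_pow 2).sub_const (k ^ 2 / 4)).fun_pow 2).const_mul
      (-360 * ν)).deriv
    rw [e.deriv_eq, this]; push_cast; ring
  have h3 : ∀ ξ : ℂ, Complex.cosh (k * (ξ - ξ₀) / 2) ≠ 0 →
      deriv (deriv (deriv u)) ξ =
        -1440 * ν * (τ ξ ^ 2 - k ^ 2 / 4) ^ 2 * (5 * τ ξ ^ 2 - k ^ 2 / 4) := by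
    intro ξ h
    have e : deriv (deriv u) =ᶠ[nhds ξ]
        fun ξ => 1440 * ν * (τ ξ * (τ ξ ^ 2 - k ^ 2 / 4) ^ 2) :=
      Filter.eventually_of_mem (hopen.mem_nhds h) h2
    have := (((hd ξ h).fun_mul ((((hd ξ h).fun_pow 2).sub_const (k ^ 2 / 4)).fun_pow 2)).const_mul
      (1440 * ν)).deriv
    rw [e.deriv_eq, this]; push_cast; ring
  intro ξ h
  have hA' : A = -450 * ν ^ 2 * k ^ 6 := by
    rw [hA, hμ']; field_simp
  simp only [Function.iterate_succ, Function.iterate_zero, Function.comp_apply, id]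
  rw [h3 ξ h, h1 ξ h, hb, hA', hμ', hu0]
  ring
end

section
/- Let ν, b, μ ∈ ℂ with ν ≠ 0 and μ ≠ 0, suppose b² = 144μν/47, let k, ξ₀ ∈ ℂ with k² = μ/(47ν), and set A = −1800 μ³/(47³ ν). Then the function u(ξ) = 120ν τ(ξ)³ − 15b τ(ξ)² + (60μ/19 − 30νk² − 15b²/(76ν)) τ(ξ) + (5/2)b k² − 13b³/(608ν²) + 7μb/(76ν), where τ(ξ) = (k/2)·tanh(k(ξ−ξ₀)/2), solves the KS ODE on the open set U = {ξ ∈ ℂ : cosh(k(ξ−ξ₀)/2) ≠ 0}. -/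
open Complex

/-- a trigonometric (tanh-polynomial) solution of the KS traveling-wave ODE
`ν u''' + b u'' + μ u' + u²/2 + A = 0`. -/
theorem ks_trig_solution_case3
    (ν b μ A k ξ₀ : ℂ) (hν : ν ≠ 0) (hμ : μ ≠ 0)
    (hb : b ^ 2 = 144 * μ * ν / 47) (hk : k ^ 2 = μ / (47 * ν))
    (hA : A = -1800 * μ ^ 3 / (47 ^ 3 * ν))
    (τ u : ℂ → ℂ)
    (hτ : ∀ ξ : ℂ, τ ξ = k / 2 * Complex.tanh (k * (ξ - ξ₀) / 2))
    (hu : ∀ ξ : ℂ, u ξ =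
      120 * ν * (τ ξ) ^ 3 - 15 * b * (τ ξ) ^ 2
        + (60 * μ / 19 - 30 * ν * k ^ 2 - 15 * b ^ 2 / (76 * ν)) * τ ξ
        + 5 / 2 * b * k ^ 2 - 13 * b ^ 3 / (608 * ν ^ 2) + 7 * μ * b / (76 * ν)) :
    ∀ ξ : ℂ, Complex.cosh (k * (ξ - ξ₀) / 2) ≠ 0 →
      ν * deriv^[3] u ξ + b * deriv^[2] u ξ + μ * deriv u ξ + (u ξ) ^ 2 / 2 + A = 0 := by
  have hμ' : μ = 47 * ν * k ^ 2 := by rw [hk]; field_simp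
  have hb' : b ^ 2 = 144 * ν ^ 2 * k ^ 2 := by rw [hb, hμ']; ring
  have hA' : A = -1800 * ν ^ 2 * k ^ 6 := by rw [hA, hμ']; field_simp
  have hu' : u = fun ξ => 120 * ν * (τ ξ) ^ 3 - 15 * b * (τ ξ) ^ 2
      + 90 * ν * k ^ 2 * τ ξ + 15 / 4 * b * k ^ 2 := by
    funext ξ
    rw [hu, show b ^ 3 = b * b ^ 2 by ring, hb', hμ']
    field_simp
    ring
  have hd : ∀ ξ, Complex.cosh (k * (ξ - ξ₀) / 2) ≠ 0 →
      HasDerivAt τ (k ^ 2 / 4 - τ ξ ^ 2) ξ := by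
    intro ξ h
    have e : τ = fun ξ => k / 2 * (Complex.sinh (k * (ξ - ξ₀) / 2) /
        Complex.cosh (k * (ξ - ξ₀) / 2)) := by
      funext x; rw [hτ, Complex.tanh_eq_sinh_div_cosh]
    have h1 : HasDerivAt (fun ξ : ℂ => k * (ξ - ξ₀) / 2) (k / 2) ξ := by
      have := (((hasDerivAt_id ξ).sub_const ξ₀).const_mul k).div_const 2
      simpa using this
    have h2 := ((h1.csinh).fun_div h1.ccosh h).const_mul (k / 2)
    rw [e]
    refine h2.congr_deriv ?_
    beta_reduce
    generalize k * (ξ - ξ₀) / 2 = z at h ⊢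
    field_simp
    ring
  have hopen : IsOpen {ξ : ℂ | Complex.cosh (k * (ξ - ξ₀) / 2) ≠ 0} :=
    isOpen_ne_fun (by fun_prop) (by fun_prop)
  -- derivative of a polynomial in τ
  have key : ∀ (f : ℂ → ℂ) (P : Polynomial ℂ),
      (∀ ξ, Complex.cosh (k * (ξ - ξ₀) / 2) ≠ 0 → f ξ = P.eval (τ ξ)) →
      ∀ ξ, Complex.cosh (k * (ξ - ξ₀) / 2) ≠ 0 →
        deriv f ξ = (P.derivative * (Polynomial.C (k ^ 2 / 4) - Polynomial.X ^ 2)).eval (τ ξ) := by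
    intro f P hf ξ h
    have h1 : f =ᶠ[nhds ξ] fun x => P.eval (τ x) :=
      Filter.eventually_of_mem (hopen.mem_nhds h) hf
    rw [h1.deriv_eq]
    have h2 := (P.hasDerivAt (τ ξ)).comp ξ (hd ξ h)
    have h3 := h2.deriv
    simp only [Function.comp_def] at h3
    rw [h3]; simp
  intro ξ h
  have k1 := key u (Polynomial.C (120 * ν) * Polynomial.X ^ 3
    - Polynomial.C (15 * b) * Polynomial.X ^ 2
    + Polynomial.C (90 * ν * k ^ 2) * Polynomial.X + Polynomial.C (15 / 4 * b * k ^ 2))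
    (by intro x _; rw [hu']; simp)
  have k2 := key _ _ k1
  have k3 := key _ _ k2
  have e2 : deriv^[2] u = deriv (deriv u) := rfl
  have e3 : deriv^[3] u = deriv (deriv (deriv u)) := rfl
  rw [e2, e3, k1 ξ h, k2 ξ h, k3 ξ h, hu', hA', hμ']
  simp only [Polynomial.derivative_mul, Polynomial.derivative_add, Polynomial.derivative_sub,
    Polynomial.derivative_C, Polynomial.derivative_X, Polynomial.derivative_X_pow,
    Polynomial.eval_mul, Polynomial.eval_add, Polynomial.eval_sub, Polynomial.eval_C,
    Polynomial.eval_X, Polynomial.eval_pow, Polynomial.eval_zero, Polynomial.eval_one,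
    Polynomial.derivative_zero, Polynomial.derivative_one]
  generalize τ ξ = t
  norm_num
  ring_nf
  simp only [hb']
  ring
end

section
/- Let ν, b, μ ∈ ℂ with ν ≠ 0 and μ ≠ 0, suppose b² = 256μν/73, let k, ξ₀ ∈ ℂ with k² = μ/(73ν), and set A = −4050 μ³/(73³ ν). Then the function u(ξ) = 120ν τ(ξ)³ − 15b τ(ξ)² + (60μ/19 − 30νk² − 15b²/(76ν)) τ(ξ) + (5/2)b k² − 13b³/(608ν²) + 7μb/(76ν), where τ(ξ) = (k/2)·tanh(k(ξ−ξ₀)/2), solves the KS ODE on the open set U = {ξ ∈ ℂ : cosh(k(ξ−ξ₀)/2) ≠ 0}. -/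
open Complex

/-- a trigonometric (tanh-polynomial) solution of the KS traveling-wave ODE
`ν u''' + b u'' + μ u' + u²/2 + A = 0`. -/
theorem ks_trig_solution_case4
    (ν b μ A k ξ₀ : ℂ) (hν : ν ≠ 0) (hμ : μ ≠ 0)
    (hb : b ^ 2 = 256 * μ * ν / 73) (hk : k ^ 2 = μ / (73 * ν))
    (hA : A = -4050 * μ ^ 3 / (73 ^ 3 * ν))
    (τ u : ℂ → ℂ)
    (hτ : ∀ ξ : ℂ, τ ξ = k / 2 * Complex.tanh (k * (ξ - ξ₀) / 2))
    (hu : ∀ ξ : ℂ, u ξ =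
      120 * ν * (τ ξ) ^ 3 - 15 * b * (τ ξ) ^ 2
        + (60 * μ / 19 - 30 * ν * k ^ 2 - 15 * b ^ 2 / (76 * ν)) * τ ξ
        + 5 / 2 * b * k ^ 2 - 13 * b ^ 3 / (608 * ν ^ 2) + 7 * μ * b / (76 * ν)) :
    ∀ ξ : ℂ, Complex.cosh (k * (ξ - ξ₀) / 2) ≠ 0 →
      ν * deriv^[3] u ξ + b * deriv^[2] u ξ + μ * deriv u ξ + (u ξ) ^ 2 / 2 + A = 0 := by
  intro ξ hξ
  -- eliminate μ, b², A in favour of ν, k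
  have hμ' : μ = 73 * ν * k ^ 2 := by rw [hk]; field_simp
  have hb' : b ^ 2 = 256 * ν ^ 2 * k ^ 2 := by rw [hb, hμ']; ring
  have hA' : A = -4050 * ν ^ 2 * k ^ 6 := by
    rw [hA, hμ']; field_simp
  have hc1 : 60 * μ / 19 - 30 * ν * k ^ 2 - 15 * b ^ 2 / (76 * ν) = 150 * ν * k ^ 2 := by
    rw [hb', hμ']; field_simp; ring
  have hu' : ∀ z, u z = 120 * ν * (τ z) ^ 3 - 15 * b * (τ z) ^ 2
      + 150 * ν * k ^ 2 * τ z + 15 / 4 * b * k ^ 2 := by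
    intro z
    have h3 : b ^ 3 = 256 * ν ^ 2 * k ^ 2 * b := by rw [← hb']; ring
    rw [hu, hc1, h3, hμ']; field_simp; ring
  have hopen : IsOpen {z : ℂ | Complex.cosh (k * (z - ξ₀) / 2) ≠ 0} := by
    apply isOpen_ne_fun _ continuous_const
    fun_prop
  -- Riccati equation
  have hd : ∀ z, Complex.cosh (k * (z - ξ₀) / 2) ≠ 0 →
      HasDerivAt τ (k ^ 2 / 4 - (τ z) ^ 2) z := by
    intro z hz
    have e : τ = fun z => k / 2 * (Complex.sinh (k * (z - ξ₀) / 2) /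
        Complex.cosh (k * (z - ξ₀) / 2)) := by
      funext z; rw [hτ, Complex.tanh_eq_sinh_div_cosh]
    have hl : HasDerivAt (fun z : ℂ => k * (z - ξ₀) / 2) (k / 2) z := by
      simpa using (((hasDerivAt_id z).sub_const ξ₀).const_mul k).div_const 2
    rw [e]
    refine ((hl.csinh.div hl.ccosh hz).const_mul (k / 2)).congr_deriv ?_
    beta_reduce
    generalize Complex.sinh (k * (z - ξ₀) / 2) = S
    generalize Complex.cosh (k * (z - ξ₀) / 2) = C at hz
    field_simp
    ring
  -- derivative of a polynomial in τ on the open set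
  have key : ∀ (f : ℂ → ℂ) (p : Polynomial ℂ),
      (∀ z, Complex.cosh (k * (z - ξ₀) / 2) ≠ 0 → f z = p.eval (τ z)) →
      ∀ z, Complex.cosh (k * (z - ξ₀) / 2) ≠ 0 →
        deriv f z = (p.derivative * (Polynomial.C (k ^ 2 / 4) - Polynomial.X ^ 2)).eval (τ z) := by
    intro f p hf z hz
    have h1 : f =ᶠ[nhds z] fun z => p.eval (τ z) := by
      filter_upwards [hopen.mem_nhds hz] with w hw using hf w hw
    rw [h1.deriv_eq]
    have := ((p.hasDerivAt (τ z)).comp z (hd z hz)).deriv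
    simpa [Function.comp_def] using this
  have h0 : ∀ z, Complex.cosh (k * (z - ξ₀) / 2) ≠ 0 → u z =
      (Polynomial.C (120 * ν) * Polynomial.X ^ 3 - Polynomial.C (15 * b) * Polynomial.X ^ 2
        + Polynomial.C (150 * ν * k ^ 2) * Polynomial.X
        + Polynomial.C (15 / 4 * b * k ^ 2)).eval (τ z) := by
    intro z _
    rw [hu']
    simp only [Polynomial.eval_add, Polynomial.eval_sub, Polynomial.eval_mul,
      Polynomial.eval_pow, Polynomial.eval_C, Polynomial.eval_X]
  have h1 := key _ _ h0
  have h2 := key _ _ h1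
  have h3 := key _ _ h2
  have e2 : deriv^[2] u ξ = deriv (deriv u) ξ := rfl
  have e3 : deriv^[3] u ξ = deriv (deriv (deriv u)) ξ := rfl
  rw [e2, e3, h3 ξ hξ, h2 ξ hξ, h1 ξ hξ, hu' ξ, hA', hμ']
  generalize τ ξ = t
  simp only [Polynomial.derivative_add, Polynomial.derivative_sub, Polynomial.derivative_mul,
    Polynomial.derivative_X_pow, Polynomial.derivative_C, Polynomial.derivative_X,
    Polynomial.eval_add, Polynomial.eval_sub, Polynomial.eval_mul, Polynomial.derivative_zero,
    Polynomial.derivative_one, Polynomial.eval_zero, Polynomial.eval_one,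
    Polynomial.eval_pow, Polynomial.eval_C, Polynomial.eval_X]
  push_cast
  linear_combination (-15 * ((k ^ 2 / 2 - 6 * t ^ 2) * (k ^ 2 / 4 - t ^ 2))
    + (15 * k ^ 2 / 4 - 15 * t ^ 2) ^ 2 / 2) * hb'
end

section
/- Let ν, b, μ ∈ ℂ with ν ≠ 0 and μ ≠ 0, suppose b² = 16μν, let k, ξ₀ ∈ ℂ with k² = μ/ν, and set A = −18 μ³/ν. Then the function u(ξ) = 120ν τ(ξ)³ − 15b τ(ξ)² + (60μ/19 − 30νk² − 15b²/(76ν)) τ(ξ) + (5/2)b k² − 13b³/(608ν²) + 7μb/(76ν), where τ(ξ) = (k/2)·tanh(k(ξ−ξ₀)/2), solves the KS ODE on the open set U = {ξ ∈ ℂ : cosh(k(ξ−ξ₀)/2) ≠ 0}. -/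
open Complex

/-- a trigonometric (tanh-polynomial) solution of the KS traveling-wave ODE
`ν u''' + b u'' + μ u' + u²/2 + A = 0`. -/
theorem ks_trig_solution_case5
    (ν b μ A k ξ₀ : ℂ) (hν : ν ≠ 0) (hμ : μ ≠ 0)
    (hb : b ^ 2 = 16 * μ * ν) (hk : k ^ 2 = μ / ν)
    (hA : A = -18 * μ ^ 3 / ν)
    (τ u : ℂ → ℂ)
    (hτ : ∀ ξ : ℂ, τ ξ = k / 2 * Complex.tanh (k * (ξ - ξ₀) / 2))
    (hu : ∀ ξ : ℂ, u ξ =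
      120 * ν * (τ ξ) ^ 3 - 15 * b * (τ ξ) ^ 2
        + (60 * μ / 19 - 30 * ν * k ^ 2 - 15 * b ^ 2 / (76 * ν)) * τ ξ
        + 5 / 2 * b * k ^ 2 - 13 * b ^ 3 / (608 * ν ^ 2) + 7 * μ * b / (76 * ν)) :
    ∀ ξ : ℂ, Complex.cosh (k * (ξ - ξ₀) / 2) ≠ 0 →
      ν * deriv^[3] u ξ + b * deriv^[2] u ξ + μ * deriv u ξ + (u ξ) ^ 2 / 2 + A = 0 := by
  intro ξ hξ
  have hμk : μ = ν * k ^ 2 := by rw [hk]; field_simp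
  have hb2 : b ^ 2 = 16 * ν ^ 2 * k ^ 2 := by rw [hb, hμk]; ring
  have hu2 : ∀ z, u z = 120 * ν * (τ z) ^ 3 - 15 * b * (τ z) ^ 2
      - 30 * ν * k ^ 2 * τ z + 9 / 4 * b * k ^ 2 := by
    intro z
    rw [hu z, show b ^ 3 = b * b ^ 2 by ring, hb2, hμk]
    field_simp
    ring
  have hU : IsOpen {z : ℂ | Complex.cosh (k * (z - ξ₀) / 2) ≠ 0} := by
    apply isOpen_ne_fun
    · exact Complex.continuous_cosh.comp (by fun_prop)
    · exact continuous_const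
  have hT : ∀ z, Complex.cosh (k * (z - ξ₀) / 2) ≠ 0 →
      HasDerivAt τ (k ^ 2 / 4 - (τ z) ^ 2) z := by
    intro z hz
    have hτf : τ = fun ξ => k / 2 * (Complex.sinh (k * (ξ - ξ₀) / 2)
        / Complex.cosh (k * (ξ - ξ₀) / 2)) := by
      funext w; rw [hτ w, Complex.tanh_eq_sinh_div_cosh]
    have hl : HasDerivAt (fun w : ℂ => k * (w - ξ₀) / 2) (k / 2) z := by
      simpa using (((hasDerivAt_id z).sub_const ξ₀).const_mul k).div_const 2
    have h := ((hl.csinh).div (hl.ccosh) hz).const_mul (k / 2)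
    rw [hτf]
    refine h.congr_deriv ?_
    field_simp
    ring
  have h1 : ∀ z, Complex.cosh (k * (z - ξ₀) / 2) ≠ 0 → deriv u z =
      (360 * ν * (τ z) ^ 2 - 30 * b * τ z - 30 * ν * k ^ 2) * (k ^ 2 / 4 - (τ z) ^ 2) := by
    intro z hz
    have t := hT z hz
    rw [funext hu2]
    refine HasDerivAt.deriv (HasDerivAt.congr_deriv (((((t.pow 3).const_mul (120 * ν)).sub
      ((t.pow 2).const_mul (15 * b))).sub (t.const_mul (30 * ν * k ^ 2))).add_const _) ?_)
    push_cast
    ring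
  have h2 : ∀ z, Complex.cosh (k * (z - ξ₀) / 2) ≠ 0 → deriv (deriv u) z =
      (720 * ν * τ z - 30 * b) * (k ^ 2 / 4 - (τ z) ^ 2) ^ 2
      + (360 * ν * (τ z) ^ 2 - 30 * b * τ z - 30 * ν * k ^ 2)
        * (-2 * τ z * (k ^ 2 / 4 - (τ z) ^ 2)) := by
    intro z hz
    have t := hT z hz
    have he : deriv u =ᶠ[nhds z] fun z => (360 * ν * (τ z) ^ 2 - 30 * b * τ z - 30 * ν * k ^ 2)
        * (k ^ 2 / 4 - (τ z) ^ 2) :=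
      Filter.eventuallyEq_of_mem (hU.mem_nhds hz) h1
    rw [he.deriv_eq]
    refine HasDerivAt.deriv (HasDerivAt.congr_deriv (((((t.pow 2).const_mul (360 * ν)).sub
      (t.const_mul (30 * b))).sub_const (30 * ν * k ^ 2)).mul
      ((t.pow 2).const_sub (k ^ 2 / 4))) ?_)
    simp
    ring
  have h3 : deriv (deriv (deriv u)) ξ =
      (720 * ν) * (k ^ 2 / 4 - (τ ξ) ^ 2) ^ 3
      + (720 * ν * τ ξ - 30 * b) * (-4 * τ ξ * (k ^ 2 / 4 - (τ ξ) ^ 2) ^ 2)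
      + (720 * ν * τ ξ - 30 * b) * (k ^ 2 / 4 - (τ ξ) ^ 2)
        * (-2 * τ ξ * (k ^ 2 / 4 - (τ ξ) ^ 2))
      + (360 * ν * (τ ξ) ^ 2 - 30 * b * τ ξ - 30 * ν * k ^ 2)
        * (-2 * (k ^ 2 / 4 - (τ ξ) ^ 2) ^ 2 + 4 * τ ξ ^ 2 * (k ^ 2 / 4 - (τ ξ) ^ 2)) := by
    have t := hT ξ hξ
    have he : deriv (deriv u) =ᶠ[nhds ξ] fun z =>
        (720 * ν * τ z - 30 * b) * (k ^ 2 / 4 - (τ z) ^ 2) ^ 2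
      + (360 * ν * (τ z) ^ 2 - 30 * b * τ z - 30 * ν * k ^ 2)
        * (-2 * τ z * (k ^ 2 / 4 - (τ z) ^ 2)) :=
      Filter.eventuallyEq_of_mem (hU.mem_nhds hξ) h2
    rw [he.deriv_eq]
    have s := (t.pow 2).const_sub (k ^ 2 / 4)
    refine HasDerivAt.deriv (HasDerivAt.congr_deriv
      ((((t.const_mul (720 * ν)).sub_const (30 * b)).mul (s.pow 2)).add
      (((((t.pow 2).const_mul (360 * ν)).sub
      (t.const_mul (30 * b))).sub_const (30 * ν * k ^ 2)).mul
      ((t.const_mul (-2)).mul s))) ?_)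
    simp
    ring
  have hA2 : A = -18 * ν ^ 2 * k ^ 6 := by
    rw [hA, hμk]; field_simp
  have e3 : deriv^[3] u ξ = deriv (deriv (deriv u)) ξ := rfl
  have e2 : deriv^[2] u ξ = deriv (deriv u) ξ := rfl
  rw [e3, e2, h3, h2 ξ hξ, h1 ξ hξ, hu2, hA2, hμk]
  generalize τ ξ = x
  ring_nf
  rw [hb2]
  ring
end

section
/- Let ν, b, μ ∈ ℂ with ν ≠ 0 and μ ≠ 0, suppose b² = 16μν, let k, ξ₀ ∈ ℂ with k² = −μ/ν, and set A = −8 μ³/ν. Then the function u(ξ) = 120ν τ(ξ)³ − 15b τ(ξ)² + (60μ/19 − 30νk² − 15b²/(76ν)) τ(ξ) + (5/2)b k² − 13b³/(608ν²) + 7μb/(76ν), where τ(ξ) = (k/2)·tanh(k(ξ−ξ₀)/2), solves the KS ODE on the open set U = {ξ ∈ ℂ : cosh(k(ξ−ξ₀)/2) ≠ 0}. -/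
open Complex

/-- A polynomial in a Riccati solution has the expected derivative near a point. -/
lemma ks_deriv_poly_s11 (τ : ℂ → ℂ) (U : Set ℂ) (K : ℂ)
    (hτ : ∀ x ∈ U, HasDerivAt τ (K - τ x ^ 2) x) (p : Polynomial ℂ) (x : ℂ) (hx : x ∈ U) :
    HasDerivAt (fun y => p.eval (τ y))
      ((p.derivative * (Polynomial.C K - Polynomial.X ^ 2)).eval (τ x)) x := by
  have := (p.hasDerivAt (τ x)).comp x (hτ x hx)
  have e : (p.derivative * (Polynomial.C K - Polynomial.X ^ 2)).eval (τ x)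
      = p.derivative.eval (τ x) * (K - τ x ^ 2) := by simp
  rw [e]
  exact this

/-- The derivative of a function equal on an open set to a polynomial in `τ`. -/
lemma ks_deriv_step (τ : ℂ → ℂ) (U : Set ℂ) (hU : IsOpen U) (K : ℂ)
    (hτ : ∀ x ∈ U, HasDerivAt τ (K - τ x ^ 2) x) (p : Polynomial ℂ) (f : ℂ → ℂ)
    (hf : ∀ x ∈ U, f x = p.eval (τ x)) :
    ∀ x ∈ U, deriv f x = (p.derivative * (Polynomial.C K - Polynomial.X ^ 2)).eval (τ x) := by
  intro x hx
  have h : f =ᶠ[nhds x] fun y => p.eval (τ y) := by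
    filter_upwards [hU.mem_nhds hx] with y hy using hf y hy
  rw [h.deriv_eq]
  exact (ks_deriv_poly_s11 τ U K hτ p x hx).deriv

/-- a trigonometric (tanh-polynomial) solution of the KS traveling-wave ODE
`ν u''' + b u'' + μ u' + u²/2 + A = 0`. -/
theorem ks_trig_solution_case6
    (ν b μ A k ξ₀ : ℂ) (hν : ν ≠ 0) (hμ : μ ≠ 0)
    (hb : b ^ 2 = 16 * μ * ν) (hk : k ^ 2 = -μ / ν)
    (hA : A = -8 * μ ^ 3 / ν)
    (τ u : ℂ → ℂ)
    (hτ : ∀ ξ : ℂ, τ ξ = k / 2 * Complex.tanh (k * (ξ - ξ₀) / 2))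
    (hu : ∀ ξ : ℂ, u ξ =
      120 * ν * (τ ξ) ^ 3 - 15 * b * (τ ξ) ^ 2
        + (60 * μ / 19 - 30 * ν * k ^ 2 - 15 * b ^ 2 / (76 * ν)) * τ ξ
        + 5 / 2 * b * k ^ 2 - 13 * b ^ 3 / (608 * ν ^ 2) + 7 * μ * b / (76 * ν)) :
    ∀ ξ : ℂ, Complex.cosh (k * (ξ - ξ₀) / 2) ≠ 0 →
      ν * deriv^[3] u ξ + b * deriv^[2] u ξ + μ * deriv u ξ + (u ξ) ^ 2 / 2 + A = 0 := by
  set U : Set ℂ := {ξ | Complex.cosh (k * (ξ - ξ₀) / 2) ≠ 0} with hUdef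
  have hU : IsOpen U := by
    apply isOpen_ne_fun _ continuous_const
    exact Complex.continuous_cosh.comp (by fun_prop)
  have hd : ∀ x ∈ U, HasDerivAt τ (k ^ 2 / 4 - τ x ^ 2) x := by
    intro x hx
    have hx' : Complex.cosh (k * (x - ξ₀) / 2) ≠ 0 := hx
    have h0 : τ = fun ξ => k / 2 *
        (Complex.sinh (k * (ξ - ξ₀) / 2) / Complex.cosh (k * (ξ - ξ₀) / 2)) := by
      funext ξ
      rw [hτ, Complex.tanh_eq_sinh_div_cosh]
    have hl : HasDerivAt (fun ξ : ℂ => k * (ξ - ξ₀) / 2) (k / 2) x := by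
      simpa using (((hasDerivAt_id x).sub_const ξ₀).const_mul k).div_const 2
    have h1 := ((hl.csinh.div hl.ccosh hx').const_mul (k / 2))
    rw [h0]
    refine h1.congr_deriv ?_
    field_simp
    ring
  have hm : μ = -ν * k ^ 2 := by
    rw [hk]
    field_simp
  have hb2 : b ^ 2 = -16 * ν ^ 2 * k ^ 2 := by
    rw [hb, hm]; ring
  have hu' : ∀ ξ, u ξ = 120 * ν * (τ ξ) ^ 3 - 15 * b * (τ ξ) ^ 2
      - 30 * ν * k ^ 2 * τ ξ + 11 / 4 * b * k ^ 2 := by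
    intro ξ
    have hb3 : b ^ 3 = b * (-16 * ν ^ 2 * k ^ 2) := by rw [← hb2]; ring
    rw [hu, hb3, hb2, hm]
    field_simp
    ring
  have hA' : A = 8 * ν ^ 2 * k ^ 6 := by
    rw [hA, hm]
    field_simp
  set p : Polynomial ℂ := Polynomial.C (120 * ν) * Polynomial.X ^ 3
    - Polynomial.C (15 * b) * Polynomial.X ^ 2
    - Polynomial.C (30 * ν * k ^ 2) * Polynomial.X + Polynomial.C (11 / 4 * b * k ^ 2) with hp
  have e0 : ∀ x ∈ U, u x = p.eval (τ x) := by
    intro x _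
    rw [hu', hp]
    simp only [Polynomial.eval_add, Polynomial.eval_sub, Polynomial.eval_mul,
      Polynomial.eval_C, Polynomial.eval_pow, Polynomial.eval_X]
  have e1 := ks_deriv_step τ U hU _ hd p u e0
  have e2 := ks_deriv_step τ U hU _ hd _ (deriv u) e1
  have e3 := ks_deriv_step τ U hU _ hd _ (deriv (deriv u)) e2
  intro ξ hξ
  have g1 := e1 ξ hξ
  have g2 := e2 ξ hξ
  have g3 := e3 ξ hξ
  change ν * deriv (deriv (deriv u)) ξ + b * deriv (deriv u) ξ + μ * deriv u ξ
    + (u ξ) ^ 2 / 2 + A = 0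
  rw [g1, g2, g3, hu', hA', hm, hp]
  simp only [Polynomial.derivative_add, Polynomial.derivative_sub, Polynomial.derivative_mul,
    Polynomial.derivative_C, Polynomial.derivative_X_pow, Polynomial.derivative_X,
    Polynomial.eval_add, Polynomial.eval_sub, Polynomial.eval_mul, Polynomial.derivative_zero,
    Polynomial.derivative_one, Polynomial.eval_zero,
    Polynomial.eval_one,
    Polynomial.eval_C, Polynomial.eval_pow, Polynomial.eval_X]
  push_cast
  linear_combination (45 / 2 * τ ξ ^ 4 - 45 / 4 * k ^ 2 * τ ξ ^ 2 + 61 / 32 * k ^ 4) * hb2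
end

section
/- Let ν, b, μ, A ∈ ℂ with ν ≠ 0. Suppose P, Q are complex polynomials with Q ≠ 0, the rational function u(ξ) = P(ξ)/Q(ξ) is nonconstant, and u solves the KS ODE at every point of ℂ where Q does not vanish. Then b = 0, μ = 0, A = 0, and there exists ξ₀ ∈ ℂ such that u(ξ) = 120ν (ξ − ξ₀)⁻³ for all ξ ≠ ξ₀ with Q(ξ) ≠ 0. -/
open Filter Topology Polynomial

theorem ks_local {f g : ℂ → ℂ} {s : ℤ} (hg : AnalyticAt ℂ g 0)
    (h : ∀ᶠ z in 𝓝[≠] (0:ℂ), f z = z ^ s * g z) :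
    AnalyticAt ℂ (fun z => (s:ℂ) * g z + z * deriv g z) 0 ∧
    ∀ᶠ z in 𝓝[≠] (0:ℂ), deriv f z = z ^ (s-1) * ((s:ℂ) * g z + z * deriv g z) := by
  constructor
  · have := hg.deriv
    fun_prop
  · have h2 : ∀ᶠ z in 𝓝[≠] (0:ℂ), ∀ᶠ y in 𝓝 z, f y = y ^ s * g y :=  by
      have := eventually_eventually_nhdsWithin.2 h
      filter_upwards [this, self_mem_nhdsWithin] with z hz hz0
      rwa [IsOpen.nhdsWithin_eq isOpen_compl_singleton hz0] at hz
    have h3 : ∀ᶠ z in 𝓝[≠] (0:ℂ), AnalyticAt ℂ g z :=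
      hg.eventually_analyticAt.filter_mono nhdsWithin_le_nhds
    filter_upwards [h2, h3, self_mem_nhdsWithin] with z hz hgz hz0
    have hz0 : z ≠ 0 := hz0
    rw [Filter.EventuallyEq.deriv_eq hz]
    have := ((hasDerivAt_zpow s z (Or.inl hz0)).mul hgz.differentiableAt.hasDerivAt).deriv
    erw [this]
    rw [zpow_sub_one₀ hz0]
    field_simp

/-- all three derivatives in one go -/
theorem ks_local3 {f g : ℂ → ℂ} {s : ℤ} (hg : AnalyticAt ℂ g 0)
    (h : ∀ᶠ z in 𝓝[≠] (0:ℂ), f z = z ^ s * g z) :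
    ∃ g1 g2 g3 : ℂ → ℂ, AnalyticAt ℂ g1 0 ∧ AnalyticAt ℂ g2 0 ∧ AnalyticAt ℂ g3 0 ∧
      (∀ z, g1 z = s * g z + z * deriv g z) ∧ (∀ z, g2 z = (s-1) * g1 z + z * deriv g1 z) ∧
      (∀ z, g3 z = (s-2) * g2 z + z * deriv g2 z) ∧
      ∀ᶠ z in 𝓝[≠] (0:ℂ), f z = z ^ s * g z ∧ deriv f z = z ^ (s-1) * g1 z ∧
        deriv^[2] f z = z ^ (s-2) * g2 z ∧ deriv^[3] f z = z ^ (s-3) * g3 z := by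
  obtain ⟨a1, h1⟩ := ks_local hg h
  obtain ⟨a2, h2⟩ := ks_local a1 h1
  obtain ⟨a3, h3⟩ := ks_local a2 h2
  refine ⟨_, _, _, a1, a2, a3, fun z => rfl, fun z => ?_, fun z => ?_, ?_⟩
  · push_cast; rfl
  · push_cast; ring
  · filter_upwards [h, h1, h2, h3] with z e0 e1 e2 e3
    refine ⟨e0, e1, ?_, ?_⟩
    · rw [show s - 2 = s - 1 - 1 by ring]; exact e2
    · rw [show s - 3 = s - 1 - 1 - 1 by ring]; exact e3

/-- a continuous function vanishing on a punctured neighbourhood vanishes at the centre -/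
theorem ks_cont {F : ℂ → ℂ} (hF : ContinuousAt F 0) (h : ∀ᶠ z in 𝓝[≠] (0:ℂ), F z = 0) :
    F 0 = 0 := by
  have h1 : Tendsto F (𝓝[≠] (0:ℂ)) (𝓝 (F 0)) := hF.tendsto.mono_left nhdsWithin_le_nhds
  have h2 : Tendsto F (𝓝[≠] (0:ℂ)) (𝓝 0) := 
    tendsto_const_nhds.congr' (by filter_upwards [h] with z hz using hz.symm)
  exact tendsto_nhds_unique h1 h2

/-- the ODE near the origin -/
def ksNear (ν b μ A : ℂ) (v : ℂ → ℂ) : Prop :=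
  ∀ᶠ ξ in 𝓝[≠] (0:ℂ),
    ν * deriv^[3] v ξ + b * deriv^[2] v ξ + μ * deriv v ξ + (v ξ) ^ 2 / 2 + A = 0

/-- pole order and leading coefficient -/
theorem ks_pole {ν b μ A : ℂ} (hν : ν ≠ 0) {f g : ℂ → ℂ} (hf : ksNear ν b μ A f) {n : ℕ}
    (hn : 0 < n) (hg : AnalyticAt ℂ g 0) (hg0 : g 0 ≠ 0)
    (h : ∀ᶠ z in 𝓝[≠] (0:ℂ), f z = z ^ (-(n:ℤ)) * g z) : n = 3 ∧ g 0 = 120 * ν := by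
  obtain ⟨g1, g2, g3, a1, a2, a3, e1, e2, e3, H⟩ := ks_local3 hg h
  have v1 : g1 0 = -n * g 0 := by rw [e1]; push_cast; ring
  have v2 : g2 0 = (-n-1) * (-n * g 0) := by rw [e2, v1]; push_cast; ring
  have v3 : g3 0 = (-n-2) * ((-n-1) * (-n * g 0)) := by rw [e3, v2]; push_cast; ring
  have c0 := hg.continuousAt
  have c1 := a1.continuousAt
  have c2 := a2.continuousAt
  have c3 := a3.continuousAt
  have key : ∀ᶠ z in 𝓝[≠] (0:ℂ), z ^ n * (ν * g3 z + b * z * g2 z + μ * z ^ 2 * g1 z) 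
      + z ^ 3 * (g z ^ 2 / 2) + A * z ^ (2 * n + 3) = 0 := by
    filter_upwards [H, hf, self_mem_nhdsWithin] with z ⟨h0, h1, h2, h3⟩ ho hz0
    have hz0 : z ≠ 0 := hz0
    rw [h0, h1, h2, h3] at ho
    simp only [zpow_sub₀ hz0, zpow_neg, zpow_natCast] at ho
    norm_cast at ho
    have := congrArg (fun t => z ^ (2 * n + 3) * t) ho
    simp only [mul_zero] at this
    rw [← this]
    field_simp
    ring
  rcases lt_trichotomy n 3 with hlt | heq | hgt
  · exfalso
    obtain ⟨k, hk⟩ : ∃ k, 3 = n + (k + 1) := ⟨3 - n - 1, by omega⟩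
    have := ks_cont (F := fun z => (ν * g3 z + b * z * g2 z + μ * z ^ 2 * g1 z) 
      + z ^ (k+1) * (g z ^ 2 / 2) + A * z ^ (n + 3)) (by fun_prop) (by
        filter_upwards [key, self_mem_nhdsWithin] with z hz hz0
        have hz0 : z ≠ 0 := hz0
        have hp : z ^ n ≠ 0 := pow_ne_zero _ hz0
        apply mul_left_cancel₀ hp
        rw [mul_zero, ← hz]
        have : z ^ 3 = z ^ n * z ^ (k+1) := by rw [← pow_add, ← hk]
        rw [two_mul, pow_add z (n+n), pow_add z n n, pow_add z n 3, this]
        ring)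
    simp [v3, hν, hg0] at this
    have h2 : ((n:ℂ)+1) * (n+2) = 0 := by 
      rcases this with h | h | h
      · linear_combination (-(n:ℂ)-1) * h
      · linear_combination (-(n:ℂ)-2) * h
      · omega
    norm_cast at h2
  · subst heq
    refine ⟨rfl, ?_⟩
    have := ks_cont (F := fun z => (ν * g3 z + b * z * g2 z + μ * z ^ 2 * g1 z) 
      + (g z ^ 2 / 2) + A * z ^ 6) (by fun_prop) (by
        filter_upwards [key, self_mem_nhdsWithin] with z hz hz0
        have hz0 : z ≠ 0 := hz0
        have hp : z ^ 3 ≠ 0 := pow_ne_zero _ hz0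
        apply mul_left_cancel₀ hp
        rw [mul_zero, ← hz]
        ring)
    simp [v3] at this
    apply mul_left_cancel₀ hg0
    linear_combination 2 * this
  · exfalso
    obtain ⟨k, hk⟩ : ∃ k, n = 3 + (k + 1) := ⟨n - 3 - 1, by omega⟩
    have := ks_cont (F := fun z => z ^ (k+1) * (ν * g3 z + b * z * g2 z + μ * z ^ 2 * g1 z) 
      + (g z ^ 2 / 2) + A * z ^ (2 * n)) (by fun_prop) (by
        filter_upwards [key, self_mem_nhdsWithin] with z hz hz0
        have hz0 : z ≠ 0 := hz0
        have hp : z ^ 3 ≠ 0 := pow_ne_zero _ hz0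
        apply mul_left_cancel₀ hp
        rw [mul_zero, ← hz]
        have : z ^ n = z ^ 3 * z ^ (k+1) := by rw [← pow_add, ← hk]
        rw [pow_add z (2*n), this]
        ring)
    have hn0 : n ≠ 0 := by omega
    simp [hg0, hn0] at this

/-- uniqueness of the Laurent expansion at a pole -/
theorem ks_unique {ν b μ A : ℂ} (hν : ν ≠ 0) {f g F G : ℂ → ℂ} (hf : ksNear ν b μ A f)
    (hF : ksNear ν b μ A F) (hg : AnalyticAt ℂ g 0) (hG : AnalyticAt ℂ G 0)
    (hg0 : g 0 = 120 * ν) (hG0 : G 0 = 120 * ν)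
    (h : ∀ᶠ z in 𝓝[≠] (0:ℂ), f z = z ^ (-(3:ℤ)) * g z)
    (H : ∀ᶠ z in 𝓝[≠] (0:ℂ), F z = z ^ (-(3:ℤ)) * G z) :
    ∀ᶠ z in 𝓝[≠] (0:ℂ), f z = F z := by
  have hd : AnalyticAt ℂ (fun z => g z - G z) 0 := by fun_prop
  by_cases hz : ∀ᶠ z in 𝓝 (0:ℂ), g z - G z = 0
  · filter_upwards [h, H, hz.filter_mono nhdsWithin_le_nhds] with z e1 e2 e3
    rw [e1, e2, sub_eq_zero.1 e3]
  exfalso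
  obtain ⟨m, k, hk, hk0, hmk⟩ := (hd.exists_eventuallyEq_pow_smul_nonzero_iff).2 hz
  have hm : m ≠ 0 := by
    rintro rfl
    have := hmk.self_of_nhds
    simp [hg0, hG0] at this
    exact hk0 this.symm
  obtain ⟨g1, g2, g3, a1, a2, a3, -, -, -, Hg⟩ := ks_local3 hg h
  obtain ⟨G1, G2, G3, A1, A2, A3, -, -, -, HG⟩ := ks_local3 hG H
  have hD : ∀ᶠ z in 𝓝[≠] (0:ℂ), f z - F z = z ^ ((m:ℤ) - 3) * k z := by
    filter_upwards [h, H, hmk.filter_mono nhdsWithin_le_nhds, self_mem_nhdsWithin]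
      with z e1 e2 e3 hz0
    have hz0 : z ≠ 0 := hz0
    rw [e1, e2, ← mul_sub, e3, zpow_sub₀ hz0, zpow_neg]
    simp
    ring
  have mer : ∀ {a c : ℂ → ℂ}, AnalyticAt ℂ c 0 →
      (∀ᶠ z in 𝓝[≠] (0:ℂ), a z = z ^ (-(3:ℤ)) * c z) → ∀ᶠ z in 𝓝[≠] (0:ℂ), AnalyticAt ℂ a z := by
    intro a c hc hac
    have : MeromorphicAt (fun z : ℂ => z ^ (-(3:ℤ)) * c z) 0 :=
      ((MeromorphicAt.id 0).zpow _).mul hc.meromorphicAt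
    exact (this.congr (by filter_upwards [hac] with z hz using hz.symm)).eventually_analyticAt
  have hsub : ∀ᶠ z in 𝓝[≠] (0:ℂ), ∀ n : ℕ,
      deriv^[n] (fun z => f z - F z) z = deriv^[n] f z - deriv^[n] F z := by
    filter_upwards [mer hg h, mer hG H] with z a1 a2 n
    rw [← iteratedDeriv_eq_iterate, ← iteratedDeriv_eq_iterate, ← iteratedDeriv_eq_iterate]
    exact iteratedDeriv_sub a1.contDiffAt a2.contDiffAt
  obtain ⟨k1, k2, k3, b1, b2, b3, e1, e2, e3, Hk⟩ := ks_local3 hk hD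
  have v1 : k1 0 = (m - 3) * k 0 := by rw [e1]; push_cast; ring
  have v2 : k2 0 = (m - 4) * ((m - 3) * k 0) := by rw [e2, v1]; push_cast; ring
  have v3 : k3 0 = (m - 5) * ((m - 4) * ((m - 3) * k 0)) := by rw [e3, v2]; push_cast; ring
  have c0 := hg.continuousAt
  have C0 := hG.continuousAt
  have d0 := hk.continuousAt
  have c1 := b1.continuousAt
  have c2 := b2.continuousAt
  have c3 := b3.continuousAt
  have := ks_cont (F := fun z => ν * k3 z + b * z * k2 z + μ * z ^ 2 * k1 z
      + (g z + G z) / 2 * k z) (by fun_prop) (by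
    filter_upwards [hf, hF, hsub, Hk, h, H, self_mem_nhdsWithin]
      with z o1 o2 hs ⟨h0, h1, h2, h3⟩ w1 w2 hz0
    have hz0 : z ≠ 0 := hz0
    have s1 := hs 1
    have s2 := hs 2
    have s3 := hs 3
    rw [h3] at s3
    rw [h2] at s2
    simp only [Function.iterate_one] at s1
    rw [h1] at s1
    have q : f z ^ 2 / 2 - F z ^ 2 / 2 = (z ^ (-(3:ℤ)) * g z + z ^ (-(3:ℤ)) * G z) / 2 *
        (z ^ ((m:ℤ) - 3) * k z) := by
      rw [← h0, ← w1, ← w2]; ring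
    have tot : ν * (z ^ ((m:ℤ) - 3 - 3) * k3 z) + b * (z ^ ((m:ℤ) - 3 - 2) * k2 z)
      + μ * (z ^ ((m:ℤ) - 3 - 1) * k1 z) + (z ^ (-(3:ℤ)) * g z + z ^ (-(3:ℤ)) * G z) / 2 *
        (z ^ ((m:ℤ) - 3) * k z) = 0 := by
      rw [s1, s2, s3, ← q]
      linear_combination o1 - o2
    have hp : z ^ ((m:ℤ) - 3 - 3) ≠ 0 := zpow_ne_zero _ hz0
    apply mul_left_cancel₀ hp
    rw [mul_zero, ← tot]
    simp only [zpow_sub₀ hz0, zpow_neg, zpow_natCast]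
    norm_cast
    field_simp
    try ring)
  simp only [v3, hg0, hG0] at this
  have h2 : ((m:ℂ) - 5) * (m - 4) * (m - 3) + 120 = 0 := by
    apply mul_left_cancel₀ (mul_ne_zero hν hk0)
    linear_combination this
  have h3 : ((m:ℤ) - 5) * (m - 4) * (m - 3) + 120 = 0 := by exact_mod_cast h2
  have hm1 : (1:ℤ) ≤ m := by omega
  by_cases hm5 : (5:ℤ) ≤ m
  · have : 0 ≤ ((m:ℤ) - 5) * (m - 4) * (m - 3) :=
      mul_nonneg (mul_nonneg (by omega) (by omega)) (by omega)
    omega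
  · have : m < 5 := by omega
    interval_cases m <;> simp at *

theorem ks_T_eval (S : ℂ[X]) (c : ℂ) (z : ℂ) :
    c * S.eval z + z * deriv (fun y => S.eval y) z = (C c * S + X * derivative S).eval z := by
  simp

theorem ks_T_coeff (S : ℂ[X]) (c : ℂ) (n : ℕ) :
    (C c * S + X * derivative S).coeff n = (c + n) * S.coeff n := by
  cases n with
  | zero => simp
  | succ n => simp [coeff_X_mul, coeff_derivative]; ring

theorem ks_poly_zero {E : ℂ[X]} (h : ∀ᶠ z in 𝓝[≠] (0:ℂ), E.eval z = 0) : E = 0 := by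
  by_contra hE
  have h1 : {z | E.eval z = 0}.Finite := by
    refine (E.roots.toFinset.finite_toSet).subset fun z hz => ?_
    simpa [hE] using hz
  have h2 : ∀ᶠ z in 𝓝[≠] (0:ℂ), z ∉ {z | E.eval z = 0} := by
    have h3 := (h1.subset (Set.sdiff_subset (t := {0}))).isClosed.isOpen_compl.mem_nhds
      (x := (0:ℂ)) (by simp)
    filter_upwards [nhdsWithin_le_nhds h3, self_mem_nhdsWithin] with z hz hz0 hz1
    exact hz ⟨hz1, hz0⟩
  obtain ⟨z, hz1, hz2⟩ := (h.and h2).exists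
  exact hz2 hz1

/-- the one-pole case -/
theorem ks_one_pole {ν b μ A : ℂ} (hν : ν ≠ 0) {f : ℂ → ℂ} (hf : ksNear ν b μ A f) (S : ℂ[X])
    (h : ∀ᶠ z in 𝓝[≠] (0:ℂ), f z = z ^ (-(3:ℤ)) * S.eval z) :
    S.natDegree ≤ 3 ∧ (S.coeff 0 ≠ 0 → b = 0 ∧ μ = 0 ∧ A = 0 ∧ S = C (120 * ν)) := by
  have hS : AnalyticAt ℂ (fun z => S.eval z) 0 := by
    simpa using (AnalyticAt.aeval_polynomial (analyticAt_id (𝕜 := ℂ) (z := (0:ℂ))) S)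
  obtain ⟨g1, g2, g3, a1, a2, a3, e1, e2, e3, H⟩ := ks_local3 hS h
  obtain ⟨D1, hD1⟩ : ∃ D, D = C (-3 : ℂ) * S + X * derivative S := ⟨_, rfl⟩
  obtain ⟨D2, hD2⟩ : ∃ D, D = C (-4 : ℂ) * D1 + X * derivative D1 := ⟨_, rfl⟩
  obtain ⟨D3, hD3⟩ : ∃ D, D = C (-5 : ℂ) * D2 + X * derivative D2 := ⟨_, rfl⟩
  have f1 : g1 = fun z => D1.eval z := by
    funext z; rw [e1, hD1, ← ks_T_eval]; push_cast; ring
  have f2 : g2 = fun z => D2.eval z := by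
    funext z; rw [e2, f1, hD2, ← ks_T_eval]; push_cast; ring
  have f3 : g3 = fun z => D3.eval z := by
    funext z; rw [e3, f2, hD3, ← ks_T_eval]; push_cast; ring
  have c1 : ∀ n, D1.coeff n = (n - 3) * S.coeff n := by
    intro n; rw [hD1, ks_T_coeff]; ring
  have c2 : ∀ n, D2.coeff n = (n - 4) * ((n - 3) * S.coeff n) := by
    intro n; rw [hD2, ks_T_coeff, c1]; ring
  have c3 : ∀ n, D3.coeff n = (n - 5) * ((n - 4) * ((n - 3) * S.coeff n)) := by
    intro n; rw [hD3, ks_T_coeff, c2]; ring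
  have hE : C ν * D3 + C b * (D2 * X ^ 1) + C μ * (D1 * X ^ 2) + C (1 / 2) * (S * S)
      + C A * X ^ 6 = 0 := by
    apply ks_poly_zero
    filter_upwards [H, hf, self_mem_nhdsWithin] with z ⟨h0, h1, h2, h3⟩ ho hz0
    have hz0 : z ≠ 0 := hz0
    rw [h0, h1, h2, h3, f1, f2, f3] at ho
    have := congrArg (fun t => z ^ 6 * t) ho
    simp only [mul_zero] at this
    simp only [eval_add, eval_mul, eval_C, eval_pow, eval_X]
    rw [← this]
    norm_num [zpow_neg]
    norm_cast
    field_simp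
  have hco : ∀ n, _ := fun n => congrArg (fun p => coeff p n) hE
  simp only [coeff_add, coeff_C_mul, coeff_zero, c3, coeff_mul_X_pow'] at hco
  have hdeg : S.natDegree ≤ 3 := by
    by_contra hd
    push Not at hd
    have := hco (S.natDegree + S.natDegree)
    rw [coeff_mul_degree_add_degree] at this
    have z0 : ∀ n, S.natDegree < n → S.coeff n = 0 := fun n hn => coeff_eq_zero_of_natDegree_lt hn
    rw [if_pos (by omega), if_pos (by omega), if_pos (by omega), c1, c2,
      coeff_C_of_ne_zero (by omega), z0 _ (by omega),
      z0 _ (by omega), z0 _ (by omega)] at this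
    simp at this
    simp [this] at hd
  refine ⟨hdeg, fun h0 => ?_⟩
  have z0 : ∀ n, 3 < n → S.coeff n = 0 := fun n hn => coeff_eq_zero_of_natDegree_lt (by omega)
  have q0 := hco 0
  have q1 := hco 1
  have q2 := hco 2
  have q3 := hco 3
  have q4 := hco 4
  have q5 := hco 5
  have q6 := hco 6
  simp [coeff_mul, Finset.Nat.antidiagonal_succ, c1, c2, z0] at q0 q1 q2 q3 q4 q5 q6
  have hSS : S = C (S.coeff 0) + C (S.coeff 1) * X + C (S.coeff 2) * X ^ 2
      + C (S.coeff 3) * X ^ 3 := by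
    conv_lhs => rw [S.as_sum_range' 4 (by omega)]
    simp [Finset.sum_range_succ, ← C_mul_X_pow_eq_monomial]
  generalize S.coeff 0 = a at *
  generalize S.coeff 1 = e at *
  generalize S.coeff 2 = c at *
  generalize S.coeff 3 = d at *
  have ha : a = 120 * ν := by
    apply mul_left_cancel₀ h0
    linear_combination 2 * q0
  subst ha
  have he : e = -15 * b := by
    apply mul_left_cancel₀ hν
    linear_combination q1 / 96
  subst he
  have q2' : 114 * ν * c + 45 / 2 * b ^ 2 - 360 * μ * ν = 0 := by linear_combination q2
  have fin : c = 0 → b = 0 → b = 0 ∧ μ = 0 ∧ A = 0 ∧ S = C (120 * ν) := by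
    intro hc hb
    subst hc hb
    have hμ : μ = 0 := by
      apply mul_left_cancel₀ hν
      linear_combination -q2' / 360
    subst hμ
    have hd : d = 0 := by
      apply mul_left_cancel₀ hν
      linear_combination q3 / 120
    subst hd
    refine ⟨rfl, rfl, by simpa using q6, by simpa using hSS⟩
  by_cases hc : c = 0
  · apply fin hc
    subst hc
    by_contra hb
    have hd : d = 0 := by
      apply mul_left_cancel₀ hb
      linear_combination -q4 / 15
    subst hd
    have hμ : μ = 0 := by
      apply mul_left_cancel₀ hb
      linear_combination q3 / 30
    subst hμ
    apply hb
    have : b ^ 2 = 0 := by linear_combination 2 / 45 * q2'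
    simpa using this
  · exfalso
    have hd : d = 0 := by
      apply mul_left_cancel₀ hc
      linear_combination q5 / 2
    subst hd
    have hcμ : c = 2 * μ := by
      apply mul_left_cancel₀ hc
      linear_combination 2 * q4
    subst hcμ
    have hμ : μ ≠ 0 := by rintro rfl; simp at hc
    have hb : b = 0 := by
      apply mul_left_cancel₀ hμ
      linear_combination q3 / 4
    subst hb
    apply mul_ne_zero hν hμ
    linear_combination -q2' / 132

/-- local form at a root of the denominator -/
theorem ks_root {P Q : ℂ[X]} (hQ : Q ≠ 0) (hPQ : IsCoprime P Q) {ν b μ A : ℂ} (hν : ν ≠ 0)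
    {p : ℂ} (hp : Q.eval p = 0)
    (ho : ksNear ν b μ A (fun z => P.eval (z + p) / Q.eval (z + p))) :
    ∃ Q2 : ℂ[X], Q = (X - C p) ^ 3 * Q2 ∧ Q2.eval p ≠ 0 ∧ P.eval p / Q2.eval p = 120 * ν ∧
      AnalyticAt ℂ (fun z => P.eval (z + p) / Q2.eval (z + p)) 0 ∧
      ∀ᶠ z in 𝓝[≠] (0:ℂ), P.eval (z + p) / Q.eval (z + p)
        = z ^ (-(3:ℤ)) * (P.eval (z + p) / Q2.eval (z + p)) := by
  obtain ⟨Q2, hQ2, hnd⟩ := Q.exists_eq_pow_rootMultiplicity_mul_and_not_dvd hQ p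
  have hn : 0 < Q.rootMultiplicity p := (rootMultiplicity_pos hQ).2 hp
  generalize Q.rootMultiplicity p = n at hQ2 hn
  have h2 : Q2.eval p ≠ 0 := by rwa [dvd_iff_isRoot] at hnd
  have hP : P.eval p ≠ 0 := by
    obtain ⟨a, c, hac⟩ := hPQ
    intro h0
    have := congrArg (eval p) hac
    simp [h0, hp] at this
  have an : ∀ S : ℂ[X], AnalyticAt ℂ (fun z => S.eval (z + p)) 0 := fun S => by
    have : AnalyticAt ℂ (fun z : ℂ => z + p) 0 := by fun_prop
    simpa using this.aeval_polynomial S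
  have hg : AnalyticAt ℂ (fun z => P.eval (z + p) / Q2.eval (z + p)) 0 :=
    (an P).div (an Q2) (by simpa using h2)
  have heq : ∀ z : ℂ, P.eval (z + p) / Q.eval (z + p)
        = z ^ (-(n:ℤ)) * (P.eval (z + p) / Q2.eval (z + p)) := by
    intro z
    rw [hQ2]
    simp [zpow_neg, div_eq_mul_inv]
    ring
  obtain ⟨rfl, hv⟩ := ks_pole hν ho hn hg (by simpa using ⟨hP, h2⟩) (Eventually.of_forall heq)
  exact ⟨Q2, hQ2, h2, by simpa using hv, hg, Eventually.of_forall heq⟩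

theorem ks_roots_eq {P Q : ℂ[X]} (hQ : Q ≠ 0) (hPQ : IsCoprime P Q) {ν b μ A : ℂ} (hν : ν ≠ 0)
    (ho : ∀ p, ksNear ν b μ A (fun z => P.eval (z + p) / Q.eval (z + p)))
    {p q : ℂ} (hp : Q.eval p = 0) (hq : Q.eval q = 0) : p = q := by
  obtain ⟨P2, -, -, v1, a1, e1⟩ := ks_root hQ hPQ hν hp (ho p)
  obtain ⟨Q2, -, -, v2, a2, e2⟩ := ks_root hQ hPQ hν hq (ho q)
  have hu := ks_unique hν (ho p) (ho q) a1 a2 (by simpa using v1) (by simpa using v2) e1 e2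
  have nz : ∀ r : ℂ, ∀ᶠ z in 𝓝[≠] (0:ℂ), Q.eval (z + r) ≠ 0 := by
    intro r
    by_contra hcon
    have hne : Q.comp (X + C r) ≠ 0 := by
      intro h0
      apply hQ
      have := congrArg (fun S => S.comp (X - C r)) h0
      simpa [comp_assoc] using this
    have hc : AnalyticAt ℂ (fun z => Q.eval (z + r)) 0 := by
      have : AnalyticAt ℂ (fun z : ℂ => z + r) 0 := by fun_prop
      simpa using this.aeval_polynomial Q
    rcases hc.eventually_eq_zero_or_eventually_ne_zero with h | h
    · apply hne
      apply ks_poly_zero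
      filter_upwards [h.filter_mono nhdsWithin_le_nhds] with z hz
      simpa using hz
    · exact hcon h
  have hpoly : P.comp (X + C p) * Q.comp (X + C q) - P.comp (X + C q) * Q.comp (X + C p) = 0 := by
    apply ks_poly_zero
    filter_upwards [hu, nz p, nz q] with z hz h1 h2
    rw [div_eq_div_iff h1 h2] at hz
    simp [hz]
  by_contra hne
  have step : ∀ r, Q.eval r = 0 → Q.eval (r + (q - p)) = 0 := by
    intro r hr
    have := congrArg (eval (r - p)) hpoly
    simp [hr] at this
    rcases this with h | h
    · exfalso
      obtain ⟨a, c, hac⟩ := hPQ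
      have := congrArg (eval r) hac
      simp [h, hr] at this
    · rw [← h]; congr 1; ring
  have all : ∀ n : ℕ, Q.eval (p + n * (q - p)) = 0 := by
    intro n
    induction n with
    | zero => simpa using hp
    | succ n ih =>
      have := step _ ih
      rw [← this]; congr 1; push_cast; ring
  apply hQ
  apply eq_zero_of_infinite_isRoot
  refine Set.infinite_of_injective_forall_mem (f := fun n : ℕ => p + n * (q - p)) ?_ all
  intro m n hmn
  have hqp : q - p ≠ 0 := sub_ne_zero.2 (Ne.symm hne)
  simpa [hqp] using hmn

theorem ks_coprime {P Q : ℂ[X]} (hQ : Q ≠ 0) (hPQ : IsCoprime P Q) {ν b μ A : ℂ} (hν : ν ≠ 0)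
    (ho : ∀ p, ksNear ν b μ A (fun z => P.eval (z + p) / Q.eval (z + p)))
    (hnc : ¬ ∃ c : ℂ, ∀ ξ : ℂ, P.eval ξ / Q.eval ξ = c) :
    b = 0 ∧ μ = 0 ∧ A = 0 ∧ ∃ ξ₀ : ℂ, ∀ ξ : ℂ, P.eval ξ / Q.eval ξ
      = 120 * ν * ((ξ - ξ₀) ^ 3)⁻¹ := by
  by_cases hr : ∃ p, Q.eval p = 0
  · obtain ⟨p, hp⟩ := hr
    obtain ⟨Q2, hQ2, hQ2p, hv, -, -⟩ := ks_root hQ hPQ hν hp (ho p)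
    have hnr : ¬ ∃ q, Q2.eval q = 0 := by
      rintro ⟨q, hq⟩
      have : p = q := ks_roots_eq hQ hPQ hν ho hp (by rw [hQ2]; simp [hq])
      subst this
      exact hQ2p hq
    have hd : Q2.degree = 0 := by
      by_contra hd
      exact hnr (IsAlgClosed.exists_root Q2 hd)
    obtain ⟨c, hc⟩ : ∃ c, Q2 = C c := ⟨_, eq_C_of_degree_eq_zero hd⟩
    subst hc
    have hc0 : c ≠ 0 := by simpa using hQ2p
    obtain ⟨-, H⟩ := ks_one_pole hν (ho p) (C c⁻¹ * P.comp (X + C p)) (by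
      refine Eventually.of_forall fun z => ?_
      rw [hQ2]
      simp [zpow_neg, div_eq_mul_inv]
      norm_cast
      ring)
    have hP0 : P.eval p ≠ 0 := by
      intro h
      simp [h] at hv
      exact hν hv
    obtain ⟨hb, hμ, hA, hS⟩ := H (by
      rw [coeff_zero_eq_eval_zero]; simp [hc0, hP0])
    refine ⟨hb, hμ, hA, p, fun ξ => ?_⟩
    have := congrArg (eval (ξ - p)) hS
    simp at this
    rw [hQ2, ← this]
    simp only [eval_mul, eval_pow, eval_sub, eval_X, eval_C, div_eq_mul_inv, mul_inv]
    ring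
  · exfalso
    have hd : Q.degree = 0 := by
      by_contra hd
      exact hr (IsAlgClosed.exists_root Q hd)
    obtain ⟨c, hc⟩ : ∃ c, Q = C c := ⟨_, eq_C_of_degree_eq_zero hd⟩
    subst hc
    have hc0 : c ≠ 0 := by simpa using hQ
    obtain ⟨H, -⟩ := ks_one_pole hν (ho 0) (X ^ 3 * (C c⁻¹ * P)) (by
      filter_upwards [self_mem_nhdsWithin] with z hz
      have hz : z ≠ 0 := hz
      simp [zpow_neg, div_eq_mul_inv]
      norm_cast
      field_simp)
    have hP : P.natDegree = 0 := by
      by_cases hP0 : P = 0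
      · simp [hP0]
      have hne : C c⁻¹ * P ≠ 0 := mul_ne_zero (by simpa using hc0) hP0
      rw [natDegree_mul (by simp) hne, natDegree_C_mul (inv_ne_zero hc0)] at H
      simp at H
      omega
    obtain ⟨d, hd⟩ : ∃ d, P = C d := ⟨_, eq_C_of_natDegree_eq_zero hP⟩
    subst hd
    exact hnc ⟨d / c, fun ξ => by simp⟩

/-- the only nonconstant rational solution of the KS ODE is
`u(ξ) = 120ν (ξ - ξ₀)⁻³`, and it requires `b = μ = A = 0`. -/
theorem ks_rational_solutions_classification
    (ν b μ A : ℂ) (hν : ν ≠ 0)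
    (P Q : Polynomial ℂ) (hQ : Q ≠ 0) (u : ℂ → ℂ)
    (hu : ∀ ξ : ℂ, u ξ = P.eval ξ / Q.eval ξ)
    (hnc : ¬ ∃ c : ℂ, ∀ ξ : ℂ, Q.eval ξ ≠ 0 → u ξ = c)
    (hode : ∀ ξ : ℂ, Q.eval ξ ≠ 0 →
      ν * deriv^[3] u ξ + b * deriv^[2] u ξ + μ * deriv u ξ + (u ξ) ^ 2 / 2 + A = 0) :
    b = 0 ∧ μ = 0 ∧ A = 0 ∧
      ∃ ξ₀ : ℂ, ∀ ξ : ℂ, ξ ≠ ξ₀ → Q.eval ξ ≠ 0 → u ξ = 120 * ν * ((ξ - ξ₀) ^ 3)⁻¹ := by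
  obtain ⟨P1, hP1⟩ := EuclideanDomain.gcd_dvd_left P Q
  obtain ⟨Q1, hQ1⟩ := EuclideanDomain.gcd_dvd_right P Q
  have hcop : IsCoprime P1 Q1 := by
    have h0 : EuclideanDomain.gcd P Q ≠ 0 := by
      intro h; rw [h, zero_mul] at hQ1; exact hQ hQ1
    have := EuclideanDomain.gcd_eq_gcd_ab P Q
    refine ⟨EuclideanDomain.gcdA P Q, EuclideanDomain.gcdB P Q, ?_⟩
    apply mul_left_cancel₀ h0
    linear_combination -this - EuclideanDomain.gcdA P Q * hP1 - EuclideanDomain.gcdB P Q * hQ1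
  generalize EuclideanDomain.gcd P Q = G at hP1 hQ1
  have hQ10 : Q1 ≠ 0 := by rintro rfl; simp at hQ1; exact hQ hQ1
  have huv : ∀ ξ, Q.eval ξ ≠ 0 → u ξ = P1.eval ξ / Q1.eval ξ := by
    intro ξ h
    rw [hu]
    rw [hQ1] at h
    rw [hP1, hQ1]
    simp at h ⊢
    rw [mul_div_mul_left _ _ h.1]
  have hnear : ∀ ξ, Q.eval ξ ≠ 0 → u =ᶠ[𝓝 ξ] fun z => P1.eval z / Q1.eval z := by
    intro ξ h
    filter_upwards [Q.continuous.continuousAt.eventually_ne h] with z hz using huv z hz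
  have ho : ∀ p, ksNear ν b μ A (fun z => P1.eval (z + p) / Q1.eval (z + p)) := by
    intro p
    have nz : ∀ᶠ z in 𝓝[≠] (0:ℂ), Q.eval (z + p) ≠ 0 := by
      have hc : AnalyticAt ℂ (fun z => Q.eval (z + p)) 0 := by
        have : AnalyticAt ℂ (fun z : ℂ => z + p) 0 := by fun_prop
        simpa using this.aeval_polynomial Q
      rcases hc.eventually_eq_zero_or_eventually_ne_zero with h | h
      · exfalso
        have h0 : Q.comp (X + C p) = 0 := by
          apply ks_poly_zero
          filter_upwards [h.filter_mono nhdsWithin_le_nhds] with z hz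
          simpa using hz
        apply hQ
        have := congrArg (fun S => S.comp (X - C p)) h0
        simpa [comp_assoc] using this
      · exact h
    filter_upwards [nz] with z hz
    have key := hode _ hz
    have hd : ∀ n : ℕ, deriv^[n] (fun z => P1.eval (z + p) / Q1.eval (z + p)) z
        = deriv^[n] u (z + p) := by
      intro n
      rw [← iteratedDeriv_eq_iterate, ← iteratedDeriv_eq_iterate,
        (hnear _ hz).iteratedDeriv_eq n]
      exact congrFun (iteratedDeriv_comp_add_const n (fun z => P1.eval z / Q1.eval z) p) z
    have d1 := hd 1
    have d0 := hd 0
    simp only [Function.iterate_one, Function.iterate_zero, id] at d1 d0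
    rw [hd 3, hd 2, d1, d0]
    exact key
  obtain ⟨hb, hμ, hA, ξ₀, h⟩ := ks_coprime hQ10 hcop hν ho (by
    rintro ⟨c, hc⟩
    exact hnc ⟨c, fun ξ hξ => by rw [huv ξ hξ, hc]⟩)
  exact ⟨hb, hμ, hA, ξ₀, fun ξ _ hξ => by rw [huv ξ hξ, h]⟩
end

section
/- Let ν, b, μ, A, k ∈ ℂ with ν ≠ 0 and k ≠ 0, let ξ₀ ∈ ℂ, let n ≥ 1 be an integer and c₀, …, c_n ∈ ℂ with c_n ≠ 0. Suppose the function u(ξ) = Σ_{j=0}^{n} c_j · ((k/2)·tanh(k(ξ−ξ₀)/2))^j solves the KS ODE on the open set {ξ ∈ ℂ : cosh(k(ξ−ξ₀)/2) ≠ 0}. Then n = 3, c₃ = 120ν, c₂ = −15b, c₁ = 60μ/19 − 30νk² − 15b²/(76ν), c₀ = (5/2)b k² − 13b³/(608ν²) + 7μb/(76ν), and the parameters satisfy one of the following six cases: (i) b = 0, νA = −4950μ³/19³, νk² = 11μ/19; (ii) b = 0, νA = 450μ³/19³, νk² = −μ/19; (iii) b² = 144μν/47, νA = −1800μ³/47³,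 νk² = μ/47; (iv) b² = 256μν/73, νA = −4050μ³/73³, νk² = μ/73; (v) b² = 16μν, νA = −18μ³, νk² = μ; (vi) b² = 16μν, νA = −8μ³, νk² = −μ. -/
open Complex

open Polynomial in
/-- The derivation on polynomials induced by the Riccati equation. -/
noncomputable def ksD (K : ℂ) (p : ℂ[X]) : ℂ[X] := derivative p * (C K - X ^ 2)

open Polynomial in
theorem ksD_coeff_zero (K : ℂ) (p : ℂ[X]) : (ksD K p).coeff 0 = K * p.coeff 1 := by
  simp [ksD, mul_sub, coeff_derivative]
  ring

open Polynomial in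
theorem ksD_coeff_succ (K : ℂ) (p : ℂ[X]) (j : ℕ) :
    (ksD K p).coeff (j + 1) = K * (j + 2) * p.coeff (j + 2) - j * p.coeff j := by
  rcases j with _ | j
  · simp [ksD, mul_sub, coeff_derivative, coeff_mul_X_pow']
    ring
  · have : (ksD K p).coeff (j + 1 + 1) = (derivative p * C K).coeff (j + 2)
        - (derivative p * X ^ 2).coeff (j + 2) := by simp [ksD, mul_sub]
    rw [this, coeff_mul_X_pow, coeff_mul_C, coeff_derivative, coeff_derivative]
    push_cast
    ring

open Polynomial in
theorem ksD_bound (K : ℂ) (p : ℂ[X]) (m : ℕ) (h : ∀ j, m < j → p.coeff j = 0) :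
    ∀ j, m + 1 < j → (ksD K p).coeff j = 0 := by
  intro j hj
  obtain ⟨i, rfl⟩ : ∃ i, j = i + 1 := ⟨j - 1, by omega⟩
  rw [ksD_coeff_succ, h _ (by omega), h _ (by omega)]
  simp

open Polynomial in
theorem ksD_top (K : ℂ) (p : ℂ[X]) (m : ℕ) (h : ∀ j, m < j → p.coeff j = 0) :
    (ksD K p).coeff (m + 1) = - m * p.coeff m := by
  rw [ksD_coeff_succ, h _ (by omega)]
  simp

theorem ks_algebra (β m K a d0 d1 d2 d3 : ℂ) (hd3 : d3 ≠ 0)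
    (e6 : -60 * d3 + d3 ^ 2 / 2 = 0)
    (e5 : -24 * d2 + 12 * β * d3 + d2 * d3 = 0)
    (e4 : 114 * K * d3 - 6 * d1 + 6 * β * d2 - 3 * m * d3 + d1 * d3 + d2 ^ 2 / 2 = 0)
    (e3 : 40 * K * d2 + β * (2 * d1 - 18 * K * d3) - 2 * m * d2 + d0 * d3 + d1 * d2 = 0)
    (e2 : -60 * K ^ 2 * d3 + 8 * K * d1 - 8 * β * K * d2 + m * (3 * K * d3 - d1)
      + d0 * d2 + d1 ^ 2 / 2 = 0)
    (e1 : -16 * K ^ 2 * d2 + β * (6 * K ^ 2 * d3 - 2 * K * d1) + 2 * m * K * d2 + d0 * d1 = 0)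
    (e0 : 6 * K ^ 3 * d3 - 2 * K ^ 2 * d1 + 2 * β * K ^ 2 * d2 + m * K * d1 + d0 ^ 2 / 2 + a = 0) :
    d3 = 120 ∧ d2 = -15 * β ∧ d1 = 60 / 19 * m - 120 * K - 15 / 76 * β ^ 2 ∧
    d0 = 10 * β * K - 13 / 608 * β ^ 3 + 7 / 76 * m * β ∧
    ((β = 0 ∧ a = -4950 * m ^ 3 / 19 ^ 3 ∧ 4 * K = 11 * m / 19) ∨
     (β = 0 ∧ a = 450 * m ^ 3 / 19 ^ 3 ∧ 4 * K = -m / 19) ∨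
     (β ^ 2 = 144 * m / 47 ∧ a = -1800 * m ^ 3 / 47 ^ 3 ∧ 4 * K = m / 47) ∨
     (β ^ 2 = 256 * m / 73 ∧ a = -4050 * m ^ 3 / 73 ^ 3 ∧ 4 * K = m / 73) ∨
     (β ^ 2 = 16 * m ∧ a = -18 * m ^ 3 ∧ 4 * K = m) ∨
     (β ^ 2 = 16 * m ∧ a = -8 * m ^ 3 ∧ 4 * K = -m)) := by
  have h3 : d3 = 120 := by
    apply mul_left_cancel₀ hd3
    linear_combination 2 * e6
  subst h3
  have h2 : d2 = -15 * β := by linear_combination e5 / 96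
  subst h2
  have h1 : d1 = 60 / 19 * m - 120 * K - 15 / 76 * β ^ 2 := by linear_combination e4 / 114
  subst h1
  have h0 : d0 = 10 * β * K - 13 / 608 * β ^ 3 + 7 / 76 * m * β := by linear_combination e3 / 120
  subst h0
  refine ⟨rfl, rfl, rfl, rfl, ?_⟩
  have hG : β * ((16 * m - β ^ 2) * (56 * m - 13 * β ^ 2 - 3040 * K)) = 0 := by
    linear_combination 46208 / 15 * e1
  have ha : a = -(960 * K ^ 3 - 2400 / 19 * m * K ^ 2 + 775 / 38 * β ^ 2 * K ^ 2
      + 60 / 19 * m ^ 2 * K + 55 / 76 * β ^ 2 * m * K - 65 / 304 * (β ^ 2) ^ 2 * K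
      + 169 / 739328 * (β ^ 2) ^ 3 - 91 / 46208 * (β ^ 2) ^ 2 * m + 49 / 11552 * β ^ 2 * m ^ 2) := by
    linear_combination e0
  have hF : 2400 / 19 * m * K - 960 * K ^ 2 - 150 / 19 * β ^ 2 * K + 660 / 361 * m ^ 2
      - 1305 / 722 * β ^ 2 * m + 1965 / 5776 * (β ^ 2) ^ 2 = 0 := by
    linear_combination e2
  clear e6 e5 e4 e3 e2 e1 e0
  rcases mul_eq_zero.1 hG with hb | hG
  · subst hb
    have : (4 * K - 11 * m / 19) * (4 * K + m / 19) = 0 := by linear_combination -hF / 60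
    rcases mul_eq_zero.1 this with h | h
    · have hK : K = 11 * m / 76 := by linear_combination h / 4
      subst hK
      exact Or.inl ⟨rfl, by rw [ha]; ring, by ring⟩
    · have hK : K = -m / 76 := by linear_combination h / 4
      subst hK
      exact Or.inr (Or.inl ⟨rfl, by rw [ha]; ring, by ring⟩)
  · generalize β ^ 2 = s at *
    rcases mul_eq_zero.1 hG with h | h
    · have hs : s = 16 * m := by linear_combination -h
      subst hs
      have : (4 * K - m) * (4 * K + m) = 0 := by linear_combination -hF / 60
      rcases mul_eq_zero.1 this with h | h
      · have hK : K = m / 4 := by linear_combination h / 4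
        subst hK
        exact Or.inr (Or.inr (Or.inr (Or.inr (Or.inl ⟨rfl, by rw [ha]; ring, by ring⟩))))
      · have hK : K = -m / 4 := by linear_combination h / 4
        subst hK
        exact Or.inr (Or.inr (Or.inr (Or.inr (Or.inr ⟨rfl, by rw [ha]; ring, by ring⟩))))
    · have hK : K = (56 * m - 13 * s) / 3040 := by linear_combination -h / 3040
      subst hK
      have : (47 * s - 144 * m) * (73 * s - 256 * m) = 0 := by
        linear_combination 36864 / (2400/19*56/3040 - 960 * (56/3040)^2 + 660/361) * hF
      rcases mul_eq_zero.1 this with h | h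
      · have hs : s = 144 * m / 47 := by linear_combination h / 47
        subst hs
        exact Or.inr (Or.inr (Or.inl ⟨rfl, by rw [ha]; ring, by ring⟩))
      · have hs : s = 256 * m / 73 := by linear_combination h / 73
        subst hs
        exact Or.inr (Or.inr (Or.inr (Or.inl ⟨rfl, by rw [ha]; ring, by ring⟩)))

open Polynomial in
theorem ks_deriv (k ξ₀ : ℂ) (p : ℂ[X]) (ξ : ℂ) (h : Complex.cosh (k * (ξ - ξ₀) / 2) ≠ 0) :
    HasDerivAt (fun ξ => p.eval (k / 2 * Complex.tanh (k * (ξ - ξ₀) / 2)))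
      ((ksD (k ^ 2 / 4) p).eval (k / 2 * Complex.tanh (k * (ξ - ξ₀) / 2))) ξ := by
  have h1 : HasDerivAt (fun ξ : ℂ => k * (ξ - ξ₀) / 2) (k / 2) ξ := by
    have := (((hasDerivAt_id ξ).sub_const ξ₀).const_mul k).div_const 2
    simpa using this
  have h2 := (h1.csinh.fun_div h1.ccosh h).const_mul (k / 2)
  have h3 := (p.hasDerivAt (k / 2 * (Complex.sinh (k * (ξ - ξ₀) / 2) /
    Complex.cosh (k * (ξ - ξ₀) / 2)))).comp ξ h2
  simp only [Complex.tanh_eq_sinh_div_cosh]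
  refine h3.congr_deriv ?_
  simp only [ksD, eval_mul, eval_sub, eval_C, eval_pow, eval_X]
  congr 1
  field_simp
  ring

open Polynomial in
theorem ks_deriv_iter (k ξ₀ : ℂ) (p : ℂ[X]) (u : ℂ → ℂ)
    (hu : ∀ ξ, Complex.cosh (k * (ξ - ξ₀) / 2) ≠ 0 →
      u ξ = p.eval (k / 2 * Complex.tanh (k * (ξ - ξ₀) / 2))) :
    ∀ ξ, Complex.cosh (k * (ξ - ξ₀) / 2) ≠ 0 →
      deriv u ξ = (ksD (k ^ 2 / 4) p).eval (k / 2 * Complex.tanh (k * (ξ - ξ₀) / 2)) := by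
  intro ξ h
  have hopen : IsOpen {ξ : ℂ | Complex.cosh (k * (ξ - ξ₀) / 2) ≠ 0} :=
    isOpen_ne_fun (Complex.continuous_cosh.comp (by fun_prop)) continuous_const
  have hev : u =ᶠ[nhds ξ] fun ξ => p.eval (k / 2 * Complex.tanh (k * (ξ - ξ₀) / 2)) := by
    filter_upwards [hopen.mem_nhds h] with z hz using hu z hz
  rw [hev.deriv_eq]
  exact (ks_deriv k ξ₀ p ξ h).deriv

open Polynomial in
theorem ks_zero (k ξ₀ : ℂ) (hk : k ≠ 0) (Q : ℂ[X])
    (h : ∀ ξ, Complex.cosh (k * (ξ - ξ₀) / 2) ≠ 0 →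
      Q.eval (k / 2 * Complex.tanh (k * (ξ - ξ₀) / 2)) = 0) : Q = 0 := by
  apply Polynomial.eq_zero_of_infinite_isRoot
  have hinj : Function.Injective (fun x : ℝ => k / 2 * ((Real.tanh x : ℝ) : ℂ)) := by
    intro x y hxy
    have h2 : k / 2 ≠ 0 := by simpa using hk
    exact Real.tanh_injective (Complex.ofReal_injective (mul_left_cancel₀ h2 hxy))
  refine (Set.infinite_range_of_injective hinj).mono ?_
  rintro _ ⟨x, rfl⟩
  have hx : k * ((ξ₀ + 2 * x / k) - ξ₀) / 2 = (x : ℂ) := by field_simp; ring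
  have := h (ξ₀ + 2 * x / k)
  rw [hx] at this
  have hc : Complex.cosh (x : ℂ) ≠ 0 := by
    rw [← Complex.ofReal_cosh]
    exact_mod_cast (Real.cosh_pos x).ne'
  simpa [Polynomial.IsRoot] using this hc

/-- classification of the tanh-polynomial solutions of the KS ODE:
a polynomial in `τ(ξ) = (k/2) tanh(k(ξ-ξ₀)/2)` solving the KS ODE must have degree `3`,
the coefficients are forced, and the parameters must satisfy one of six cases. -/
theorem ks_tanh_polynomial_classification
    (ν b μ A k ξ₀ : ℂ) (hν : ν ≠ 0) (hk : k ≠ 0)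
    (n : ℕ) (hn : 1 ≤ n) (c : ℕ → ℂ) (hcn : c n ≠ 0)
    (τ u : ℂ → ℂ)
    (hτ : ∀ ξ : ℂ, τ ξ = k / 2 * Complex.tanh (k * (ξ - ξ₀) / 2))
    (hu : ∀ ξ : ℂ, u ξ = ∑ j ∈ Finset.range (n + 1), c j * (τ ξ) ^ j)
    (hode : ∀ ξ : ℂ, Complex.cosh (k * (ξ - ξ₀) / 2) ≠ 0 →
      ν * deriv^[3] u ξ + b * deriv^[2] u ξ + μ * deriv u ξ + (u ξ) ^ 2 / 2 + A = 0) :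
    n = 3 ∧ c 3 = 120 * ν ∧ c 2 = -15 * b ∧
      c 1 = 60 * μ / 19 - 30 * ν * k ^ 2 - 15 * b ^ 2 / (76 * ν) ∧
      c 0 = 5 / 2 * b * k ^ 2 - 13 * b ^ 3 / (608 * ν ^ 2) + 7 * μ * b / (76 * ν) ∧
      ((b = 0 ∧ ν * A = -4950 * μ ^ 3 / 19 ^ 3 ∧ ν * k ^ 2 = 11 * μ / 19) ∨
       (b = 0 ∧ ν * A = 450 * μ ^ 3 / 19 ^ 3 ∧ ν * k ^ 2 = -μ / 19) ∨
       (b ^ 2 = 144 * μ * ν / 47 ∧ ν * A = -1800 * μ ^ 3 / 47 ^ 3 ∧ ν * k ^ 2 = μ / 47) ∨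
       (b ^ 2 = 256 * μ * ν / 73 ∧ ν * A = -4050 * μ ^ 3 / 73 ^ 3 ∧ ν * k ^ 2 = μ / 73) ∨
       (b ^ 2 = 16 * μ * ν ∧ ν * A = -18 * μ ^ 3 ∧ ν * k ^ 2 = μ) ∨
       (b ^ 2 = 16 * μ * ν ∧ ν * A = -8 * μ ^ 3 ∧ ν * k ^ 2 = -μ)) := by
  set K : ℂ := k ^ 2 / 4 with hK
  obtain ⟨p, hpdef⟩ : ∃ p : Polynomial ℂ,
      p = ∑ j ∈ Finset.range (n + 1), Polynomial.C (c j) * Polynomial.X ^ j := ⟨_, rfl⟩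
  have hpc : ∀ j, p.coeff j = if j ≤ n then c j else 0 := by
    intro j
    rw [hpdef, Polynomial.finsetSum_coeff]
    simp [Polynomial.coeff_X_pow]
  have hb0 : ∀ j, n < j → p.coeff j = 0 := fun j hj => by rw [hpc, if_neg (by omega)]
  have hpn : p.coeff n = c n := by rw [hpc, if_pos le_rfl]
  have hu0 : ∀ ξ, Complex.cosh (k * (ξ - ξ₀) / 2) ≠ 0 →
      u ξ = p.eval (k / 2 * Complex.tanh (k * (ξ - ξ₀) / 2)) := by
    intro ξ _
    rw [hu, hpdef, Polynomial.eval_finsetSum, hτ]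
    simp
  have hu1 := ks_deriv_iter k ξ₀ p u hu0
  have hu2 := ks_deriv_iter k ξ₀ _ _ hu1
  have hu3 := ks_deriv_iter k ξ₀ _ _ hu2
  rw [← hK] at hu1 hu2 hu3
  have hQ : Polynomial.C ν * ksD K (ksD K (ksD K p)) + Polynomial.C b * ksD K (ksD K p)
      + Polynomial.C μ * ksD K p + Polynomial.C (1 / 2) * (p * p) + Polynomial.C A = 0 := by
    apply ks_zero k ξ₀ hk
    intro ξ h
    have := hode ξ h
    simp only [Function.iterate_succ, Function.iterate_zero, Function.comp_apply, id] at this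
    rw [hu3 ξ h, hu2 ξ h, hu1 ξ h, hu0 ξ h] at this
    simp only [Polynomial.eval_add, Polynomial.eval_mul, Polynomial.eval_C]
    linear_combination this
  have hco : ∀ j, ν * (ksD K (ksD K (ksD K p))).coeff j + b * (ksD K (ksD K p)).coeff j
      + μ * (ksD K p).coeff j + 1 / 2 * (p * p).coeff j
      + (Polynomial.C A : Polynomial ℂ).coeff j = 0 := by
    intro j
    have := congrArg (fun q => Polynomial.coeff q j) hQ
    simpa only [Polynomial.coeff_add, Polynomial.coeff_C_mul, Polynomial.coeff_zero] using this
  have hb1 := ksD_bound K p n hb0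
  have hb2 := ksD_bound K _ _ hb1
  have hb3 := ksD_bound K _ _ hb2
  have ht1 := ksD_top K p n hb0
  have ht2 := ksD_top K _ _ hb1
  have ht3 := ksD_top K _ _ hb2
  have hdeg : p.natDegree ≤ n := Polynomial.natDegree_le_iff_coeff_eq_zero.2 hb0
  have hn3 : n = 3 := by
    rcases lt_trichotomy n 3 with h | h | h
    · exfalso
      have h1 := hco (n + 1 + 1 + 1)
      rw [hb1 _ (by omega), hb2 _ (by omega), ht3, ht2, ht1, hpn,
        Polynomial.coeff_C_of_ne_zero (by omega), Polynomial.coeff_eq_zero_of_natDegree_lt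
          (lt_of_le_of_lt Polynomial.natDegree_mul_le (by omega))] at h1
      have h2 : ν * c n * (((n * (n + 1) * (n + 2) : ℕ)) : ℂ) = 0 := by
        push_cast at h1 ⊢
        linear_combination -h1
      have h3 : ((n * (n + 1) * (n + 2) : ℕ) : ℂ) ≠ 0 := by
        rw [Nat.cast_ne_zero]
        positivity
      exact mul_ne_zero (mul_ne_zero hν hcn) h3 h2
    · exact h
    · exfalso
      have h1 := hco (n + n)
      rw [hb1 _ (by omega), hb2 _ (by omega), hb3 _ (by omega),
        Polynomial.coeff_mul_add_eq_of_natDegree_le hdeg hdeg, hpn,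
        Polynomial.coeff_C_of_ne_zero (by omega)] at h1
      apply mul_ne_zero hcn hcn
      linear_combination 2 * h1
  subst hn3
  have q0 : p.coeff 0 = c 0 := by simp [hpc]
  have q1 : p.coeff 1 = c 1 := by simp [hpc]
  have q2 : p.coeff 2 = c 2 := by simp [hpc]
  have q3 : p.coeff 3 = c 3 := by simp [hpc]
  have q4 : p.coeff 4 = 0 := by simp [hpc]
  have q5 : p.coeff 5 = 0 := by simp [hpc]
  have q6 : p.coeff 6 = 0 := by simp [hpc]
  have q7 : p.coeff 7 = 0 := by simp [hpc]
  have q8 : p.coeff 8 = 0 := by simp [hpc]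
  have q9 : p.coeff 9 = 0 := by simp [hpc]
  have f0 := hco 0
  have f1 := hco (0 + 1)
  have f2 := hco (1 + 1)
  have f3 := hco (2 + 1)
  have f4 := hco (3 + 1)
  have f5 := hco (4 + 1)
  have f6 := hco (5 + 1)
  have g1 := ksD_coeff_succ K
  have r1 : ∀ q, (ksD K q).coeff 1 = K * 2 * q.coeff 2 := fun q => by
    rw [ksD_coeff_succ K q 0]; simp
  have r2 : ∀ q, (ksD K q).coeff 2 = K * 3 * q.coeff 3 - q.coeff 1 := fun q => by
    rw [ksD_coeff_succ K q 1]; norm_num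
  have r3 : ∀ q, (ksD K q).coeff 3 = K * 4 * q.coeff 4 - 2 * q.coeff 2 := fun q => by
    rw [ksD_coeff_succ K q 2]; norm_num
  have r4 : ∀ q, (ksD K q).coeff 4 = K * 5 * q.coeff 5 - 3 * q.coeff 3 := fun q => by
    rw [ksD_coeff_succ K q 3]; norm_num
  have r5 : ∀ q, (ksD K q).coeff 5 = K * 6 * q.coeff 6 - 4 * q.coeff 4 := fun q => by
    rw [ksD_coeff_succ K q 4]; norm_num
  have r6 : ∀ q, (ksD K q).coeff 6 = K * 7 * q.coeff 7 - 5 * q.coeff 5 := fun q => by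
    rw [ksD_coeff_succ K q 5]; norm_num
  have r7 : ∀ q, (ksD K q).coeff 7 = K * 8 * q.coeff 8 - 6 * q.coeff 6 := fun q => by
    rw [ksD_coeff_succ K q 6]; norm_num
  have r8 : ∀ q, (ksD K q).coeff 8 = K * 9 * q.coeff 9 - 7 * q.coeff 7 := fun q => by
    rw [ksD_coeff_succ K q 7]; norm_num
  simp [Polynomial.coeff_mul, Finset.Nat.antidiagonal_succ, Polynomial.coeff_C, ksD_coeff_zero,
    r1, r2, r3, r4, r5, r6, r7, r8, q0, q1, q2, q3, q4, q5, q6, q7, q8, q9] at f0 f1 f2 f3 f4 f5 f6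
  obtain ⟨d0, hd0⟩ : ∃ d, c 0 = ν * d := ⟨c 0 / ν, by field_simp⟩
  obtain ⟨d1, hd1⟩ : ∃ d, c 1 = ν * d := ⟨c 1 / ν, by field_simp⟩
  obtain ⟨d2, hd2⟩ : ∃ d, c 2 = ν * d := ⟨c 2 / ν, by field_simp⟩
  obtain ⟨d3, hd3⟩ : ∃ d, c 3 = ν * d := ⟨c 3 / ν, by field_simp⟩
  obtain ⟨β, hβ⟩ : ∃ d, b = ν * d := ⟨b / ν, by field_simp⟩
  obtain ⟨m, hm⟩ : ∃ d, μ = ν * d := ⟨μ / ν, by field_simp⟩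
  obtain ⟨a, ha⟩ : ∃ d, A = ν ^ 2 * d := ⟨A / ν ^ 2, by field_simp⟩
  simp only [hd0, hd1, hd2, hd3] at f0 f1 f2 f3 f4 f5 f6 hcn ⊢
  subst hβ hm ha
  have hν2 : ν ^ 2 ≠ 0 := pow_ne_zero 2 hν
  have hk4 : k ^ 2 = 4 * K := by rw [hK]; ring
  have hd3' : d3 ≠ 0 := right_ne_zero_of_mul hcn
  obtain ⟨t3, t2, t1, t0, hcases⟩ := ks_algebra β m K a d0 d1 d2 d3 hd3'
    (mul_left_cancel₀ hν2 (by linear_combination f6))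
    (mul_left_cancel₀ hν2 (by linear_combination f5))
    (mul_left_cancel₀ hν2 (by linear_combination f4))
    (mul_left_cancel₀ hν2 (by linear_combination f3))
    (mul_left_cancel₀ hν2 (by linear_combination f2))
    (mul_left_cancel₀ hν2 (by linear_combination f1))
    (mul_left_cancel₀ hν2 (by linear_combination f0))
  rw [hk4]
  refine ⟨trivial, by rw [t3]; ring, by rw [t2]; ring, by rw [t1]; field_simp; ring,
    by rw [t0]; field_simp; ring, ?_⟩
  rcases hcases with ⟨x, y, z⟩ | ⟨x, y, z⟩ | ⟨x, y, z⟩ | ⟨x, y, z⟩ | ⟨x, y, z⟩ | ⟨x, y, z⟩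
  · refine Or.inl ⟨by rw [x]; ring, ?_, ?_⟩
    · linear_combination ν ^ 3 * y
    · linear_combination ν * z
  · refine Or.inr (Or.inl ⟨by rw [x]; ring, ?_, ?_⟩)
    · linear_combination ν ^ 3 * y
    · linear_combination ν * z
  · refine Or.inr (Or.inr (Or.inl ⟨?_, ?_, ?_⟩))
    · linear_combination ν ^ 2 * x
    · linear_combination ν ^ 3 * y
    · linear_combination ν * z
  · refine Or.inr (Or.inr (Or.inr (Or.inl ⟨?_, ?_, ?_⟩)))
    · linear_combination ν ^ 2 * x
    · linear_combination ν ^ 3 * y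
    · linear_combination ν * z
  · refine Or.inr (Or.inr (Or.inr (Or.inr (Or.inl ⟨?_, ?_, ?_⟩))))
    · linear_combination ν ^ 2 * x
    · linear_combination ν ^ 3 * y
    · linear_combination ν * z
  · refine Or.inr (Or.inr (Or.inr (Or.inr (Or.inr ⟨?_, ?_, ?_⟩))))
    · linear_combination ν ^ 2 * x
    · linear_combination ν ^ 3 * y
    · linear_combination ν * z
end

section
/- Let ν, b, μ, A ∈ ℂ with ν ≠ 0 and b² = 16μν. Set g₂ = μ²/(12ν²) and g₃ = (13μ³ + νA)/(1080ν³). Let U ⊆ ℂ be open and let w be analytic on U satisfying (w')² = 4w³ − g₂w − g₃ and w'' = 6w² − g₂/2 on U, and put u = −60ν w' − 15b w − bμ/(4ν) and u_s = u + 3b³/(32ν²). Then u satisfies the first-order equation (u' + (b/(2ν)) u_s)² · (u' − (b/(4ν)) u_s) + (9/(40ν)) · (u_s² + 15b⁶/(1024ν⁴) + 10A/3)² = 0 identically on U. -/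
/-- the elliptic solution `u = -60ν w' - 15b w - bμ/(4ν)` of the KS ODE
(case `b² = 16μν`) satisfies the first-order autonomous subequation
`(u' + (b/2ν) u_s)² (u' - (b/4ν) u_s) + (9/40ν)(u_s² + 15b⁶/1024ν⁴ + 10A/3)² = 0`,
where `u_s = u + 3b³/(32ν²)`. -/
theorem ks_elliptic_first_order_subequation
    (ν b μ A : ℂ) (hν : ν ≠ 0) (hb : b ^ 2 = 16 * μ * ν)
    (g₂ g₃ : ℂ) (hg₂ : g₂ = μ ^ 2 / (12 * ν ^ 2))
    (hg₃ : g₃ = (13 * μ ^ 3 + ν * A) / (1080 * ν ^ 3))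
    (U : Set ℂ) (hU : IsOpen U)
    (w : ℂ → ℂ) (hw : AnalyticOnNhd ℂ w U)
    (hweq : ∀ z ∈ U, (deriv w z) ^ 2 = 4 * (w z) ^ 3 - g₂ * w z - g₃)
    (hweq2 : ∀ z ∈ U, deriv^[2] w z = 6 * (w z) ^ 2 - g₂ / 2)
    (u us : ℂ → ℂ)
    (hu : ∀ z : ℂ, u z = -60 * ν * deriv w z - 15 * b * w z - b * μ / (4 * ν))
    (hus : ∀ z : ℂ, us z = u z + 3 * b ^ 3 / (32 * ν ^ 2)) :
    ∀ z ∈ U,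
      (deriv u z + b / (2 * ν) * us z) ^ 2 * (deriv u z - b / (4 * ν) * us z)
        + 9 / (40 * ν) *
          ((us z) ^ 2 + 15 * b ^ 6 / (1024 * ν ^ 4) + 10 * A / 3) ^ 2 = 0 := by
  intro z hz
  have hd1 : DifferentiableAt ℂ w z := (hw z hz).differentiableAt
  have hd2 : DifferentiableAt ℂ (deriv w) z := (hw z hz).deriv.differentiableAt
  have h2 : HasDerivAt (deriv w) (6 * (w z) ^ 2 - g₂ / 2) z := by
    rw [← hweq2 z hz]
    exact hd2.hasDerivAt
  have hud : deriv u z = -60 * ν * (6 * (w z) ^ 2 - g₂ / 2) - 15 * b * deriv w z := by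
    have hfun : u = fun z => -60 * ν * deriv w z - 15 * b * w z - b * μ / (4 * ν) := funext hu
    rw [hfun]
    exact (((h2.const_mul (-60 * ν)).sub (hd1.hasDerivAt.const_mul (15 * b))).sub_const _).deriv
  have hw1 := hweq z hz
  rw [hud, hus, hu]
  generalize deriv w z = p at *
  generalize w z = x at *
  obtain ⟨c, rfl⟩ : ∃ c, b = c * ν := ⟨b / ν, by field_simp⟩
  obtain rfl : μ = c ^ 2 * ν / 16 := by
    have : ν * (16 * μ - c ^ 2 * ν) = 0 := by linear_combination -hb
    rcases mul_eq_zero.mp this with h | h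
    · exact absurd h hν
    · linear_combination h / 16
  have hg2 : g₂ = c ^ 4 / 3072 := by rw [hg₂]; field_simp; ring
  have hA : A = ν ^ 2 * (1080 * (4 * x ^ 3 - c ^ 4 / 3072 * x - p ^ 2) - 13 * c ^ 6 / 4096) := by
    have h3 : g₃ = 4 * x ^ 3 - c ^ 4 / 3072 * x - p ^ 2 := by
      rw [← hg2]; linear_combination hw1
    rw [← h3, hg₃]; field_simp; ring
  rw [hg2, hA]
  field_simp
  ring
end

section
/- Let ν, b, μ ∈ ℂ with ν ≠ 0 and μ ≠ 0, suppose b² = 144μν/47, let k, ξ₀ ∈ ℂ with k² = μ/(47ν), set A = −1800 μ³/(47³ ν), and let u(ξ) = 120ν τ(ξ)³ − 15b τ(ξ)² + (60μ/19 − 30νk² − 15b²/(76ν)) τ(ξ) + (5/2)b k² − 13b³/(608ν²) + 7μb/(76ν), where τ(ξ) = (k/2)·tanh(k(ξ−ξ₀)/2), on U = {ξ ∈ ℂ : cosh(k(ξ−ξ₀)/2) ≠ 0}. Put u_s = u − 5b³/(144ν²). Then u satisfies the first-order equation (u' + (b/(4ν)) u_s)³ + (9/(40ν)) u_s⁴ =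 0 identically on U. -/
open Complex

/-- the trigonometric solution of the KS ODE in the case `b² = 144μν/47`
satisfies the first-order subequation `(u' + (b/4ν) u_s)³ + (9/40ν) u_s⁴ = 0`
with `u_s = u - 5b³/(144ν²)`. -/
theorem ks_trig_case3_first_order_subequation
    (ν b μ A k ξ₀ : ℂ) (hν : ν ≠ 0) (hμ : μ ≠ 0)
    (hb : b ^ 2 = 144 * μ * ν / 47) (hk : k ^ 2 = μ / (47 * ν))
    (hA : A = -1800 * μ ^ 3 / (47 ^ 3 * ν))
    (τ u us : ℂ → ℂ)
    (hτ : ∀ ξ : ℂ, τ ξ = k / 2 * Complex.tanh (k * (ξ - ξ₀) / 2))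
    (hu : ∀ ξ : ℂ, u ξ =
      120 * ν * (τ ξ) ^ 3 - 15 * b * (τ ξ) ^ 2
        + (60 * μ / 19 - 30 * ν * k ^ 2 - 15 * b ^ 2 / (76 * ν)) * τ ξ
        + 5 / 2 * b * k ^ 2 - 13 * b ^ 3 / (608 * ν ^ 2) + 7 * μ * b / (76 * ν))
    (hus : ∀ ξ : ℂ, us ξ = u ξ - 5 * b ^ 3 / (144 * ν ^ 2)) :
    ∀ ξ : ℂ, Complex.cosh (k * (ξ - ξ₀) / 2) ≠ 0 →
      (deriv u ξ + b / (4 * ν) * us ξ) ^ 3 + 9 / (40 * ν) * (us ξ) ^ 4 = 0 := by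
  intro ξ hc
  have hμ' : μ = 47 * ν * k ^ 2 := by
    rw [hk]; field_simp
  have hb' : ∃ e : ℂ, (e = 1 ∨ e = -1) ∧ b = 12 * e * ν * k := by
    have h : (b - 12 * ν * k) * (b + 12 * ν * k) = 0 := by
      have : b ^ 2 = 144 * ν ^ 2 * k ^ 2 := by rw [hb, hμ']; ring
      linear_combination this
    rcases mul_eq_zero.mp h with h | h
    · exact ⟨1, Or.inl rfl, by linear_combination h⟩
    · exact ⟨-1, Or.inr rfl, by linear_combination h⟩
  obtain ⟨e, he, hbe⟩ := hb'
  have he2 : e ^ 2 = 1 := by rcases he with rfl | rfl <;> norm_num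
  have hu' : ∀ x, u x = 15 * ν * k ^ 3 * (Complex.tanh (k * (x - ξ₀) / 2) - e) ^ 3
      + 60 * e * ν * k ^ 3 := by
    intro x
    rw [hu, hτ, hbe, hμ']
    generalize Complex.tanh (k * (x - ξ₀) / 2) = t
    rcases he with rfl | rfl <;> field_simp <;> ring
  have hus' : us ξ = 15 * ν * k ^ 3 * (Complex.tanh (k * (ξ - ξ₀) / 2) - e) ^ 3 := by
    rw [hus, hu', hbe]
    rcases he with rfl | rfl <;> field_simp <;> ring
  have hlin : HasDerivAt (fun x : ℂ => k * (x - ξ₀) / 2) (k / 2) ξ := by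
    simpa using (((hasDerivAt_id ξ).sub_const ξ₀).const_mul k).div_const 2
  have ht : HasDerivAt (fun x : ℂ => Complex.tanh (k * (x - ξ₀) / 2))
      (k / 2 * (1 - Complex.tanh (k * (ξ - ξ₀) / 2) ^ 2)) ξ := by
    have h := (hlin.csinh).div (hlin.ccosh) hc
    have hf : (fun x : ℂ => Complex.tanh (k * (x - ξ₀) / 2)) =
        (fun x : ℂ => Complex.sinh (k * (x - ξ₀) / 2)) /
          (fun x : ℂ => Complex.cosh (k * (x - ξ₀) / 2)) := by
      funext x
      simp [Complex.tanh_eq_sinh_div_cosh]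
    rw [hf]
    refine h.congr_deriv ?_
    rw [Complex.tanh_eq_sinh_div_cosh]
    field_simp
  have hd : deriv u ξ = 15 * ν * k ^ 3 * (3 * (Complex.tanh (k * (ξ - ξ₀) / 2) - e) ^ 2 *
      (k / 2 * (1 - Complex.tanh (k * (ξ - ξ₀) / 2) ^ 2))) := by
    have h := (((ht.sub_const e).pow 3).const_mul (15 * ν * k ^ 3)).add_const
      (60 * e * ν * k ^ 3)
    rw [funext hu']
    simpa using h.deriv
  rw [hd, hus', hbe]
  generalize Complex.tanh (k * (ξ - ξ₀) / 2) = t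
  rcases he with rfl | rfl <;> field_simp <;> ring
end

section
/- Let ν, b, μ ∈ ℂ with ν ≠ 0 and μ ≠ 0, suppose b² = 256μν/73, let k, ξ₀ ∈ ℂ with k² = μ/(73ν), set A = −4050 μ³/(73³ ν), and let u(ξ) = 120ν τ(ξ)³ − 15b τ(ξ)² + (60μ/19 − 30νk² − 15b²/(76ν)) τ(ξ) + (5/2)b k² − 13b³/(608ν²) + 7μb/(76ν), where τ(ξ) = (k/2)·tanh(k(ξ−ξ₀)/2), on U = {ξ ∈ ℂ : cosh(k(ξ−ξ₀)/2) ≠ 0}. Put u_s = u − 45b³/(2048ν²). Then u satisfies the first-order equation (u' + (b/(8ν)) u_s)² · (u' + (b/(2ν)) u_s) + (9/(40ν)) · (u_s² + (5b³/(1024ν²)) u_s + (5b²/(128ν)) u')² = 0 identically on U. -/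
open Complex

/-- the trigonometric solution of the KS ODE in the case `b² = 256μν/73`
satisfies the first-order subequation
`(u' + (b/8ν) u_s)² (u' + (b/2ν) u_s) + (9/40ν)(u_s² + (5b³/1024ν²) u_s + (5b²/128ν) u')² = 0`
with `u_s = u - 45b³/(2048ν²)`. -/
theorem ks_trig_case4_first_order_subequation
    (ν b μ A k ξ₀ : ℂ) (hν : ν ≠ 0) (hμ : μ ≠ 0)
    (hb : b ^ 2 = 256 * μ * ν / 73) (hk : k ^ 2 = μ / (73 * ν))
    (hA : A = -4050 * μ ^ 3 / (73 ^ 3 * ν))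
    (τ u us : ℂ → ℂ)
    (hτ : ∀ ξ : ℂ, τ ξ = k / 2 * Complex.tanh (k * (ξ - ξ₀) / 2))
    (hu : ∀ ξ : ℂ, u ξ =
      120 * ν * (τ ξ) ^ 3 - 15 * b * (τ ξ) ^ 2
        + (60 * μ / 19 - 30 * ν * k ^ 2 - 15 * b ^ 2 / (76 * ν)) * τ ξ
        + 5 / 2 * b * k ^ 2 - 13 * b ^ 3 / (608 * ν ^ 2) + 7 * μ * b / (76 * ν))
    (hus : ∀ ξ : ℂ, us ξ = u ξ - 45 * b ^ 3 / (2048 * ν ^ 2)) :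
    ∀ ξ : ℂ, Complex.cosh (k * (ξ - ξ₀) / 2) ≠ 0 →
      (deriv u ξ + b / (8 * ν) * us ξ) ^ 2 * (deriv u ξ + b / (2 * ν) * us ξ)
        + 9 / (40 * ν) *
          ((us ξ) ^ 2 + 5 * b ^ 3 / (1024 * ν ^ 2) * us ξ
            + 5 * b ^ 2 / (128 * ν) * deriv u ξ) ^ 2 = 0 := by
  intro ξ hc
  have hμe : μ = 73 * ν * k ^ 2 := by rw [hk]; field_simp
  have hT : HasDerivAt τ (k ^ 2 / 4 - τ ξ ^ 2) ξ := by
    have hlin : HasDerivAt (fun x : ℂ => k * (x - ξ₀) / 2) (k / 2) ξ := by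
      have := (((hasDerivAt_id ξ).sub_const ξ₀).const_mul k).div_const 2
      simpa using this
    have h1 := (hlin.csinh.div hlin.ccosh hc).const_mul (k / 2)
    have he : τ = fun x => k / 2 * (Complex.sinh (k * (x - ξ₀) / 2) /
        Complex.cosh (k * (x - ξ₀) / 2)) := by
      funext x
      rw [hτ x, Complex.tanh_eq_sinh_div_cosh]
    rw [he]
    refine h1.congr_deriv ?_
    field_simp
    ring
  have hU : HasDerivAt u
      ((360 * ν * τ ξ ^ 2 - 30 * b * τ ξ
        + (60 * μ / 19 - 30 * ν * k ^ 2 - 15 * b ^ 2 / (76 * ν))) * (k ^ 2 / 4 - τ ξ ^ 2)) ξ := by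
    have he := funext hu
    rw [he]
    have h1 := ((((((hT.pow 3).const_mul (120 * ν)).sub ((hT.pow 2).const_mul (15 * b))).add
      (hT.const_mul (60 * μ / 19 - 30 * ν * k ^ 2 - 15 * b ^ 2 / (76 * ν)))).add_const
      (5 / 2 * b * k ^ 2)).sub_const (13 * b ^ 3 / (608 * ν ^ 2))).add_const (7 * μ * b / (76 * ν))
    refine h1.congr_deriv ?_
    push_cast
    ring
  rw [hU.deriv, hus, hu]
  generalize τ ξ = t
  have hbb : (b - 16 * ν * k) * (b + 16 * ν * k) = 0 := by
    have : b ^ 2 = 256 * ν ^ 2 * k ^ 2 := by rw [hb, hμe]; ring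
    linear_combination this
  rcases mul_eq_zero.mp hbb with h | h
  · have hb' : b = 16 * ν * k := by linear_combination h
    rw [hμe, hb']
    field_simp
    ring
  · have hb' : b = -16 * ν * k := by linear_combination h
    rw [hμe, hb']
    field_simp
    ring
end
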